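/- arXiv:1611.06414 — 4 statements merged into one kernel-verified Lean document; each statement's English description precedes it below -/
import Mathlib

section
/- For any finite set A of integers with |A| ≥ 16k^4, one has S_k ≤ M_k ≤ 2·S_k, where M_k is the total number of solutions to x_1+...+x_k = y_1+...+y_k in A^{2k} and S_k is the number of such solutions with the x_i pairwise distinct and the y_i pairwise distinct. -/
open Finset

open scoped Classical in
/-- `M_k(A)`: number of solutions of `x₁+⋯+x_k = y₁+⋯+y_k` in `A^{2k}`. -/
noncomputable def Mcount (k : ℕ) (A : Finset ℤ) : ℕ :=
  (((Fintype.piFinset fun _ : Fin k => A) ×ˢ (Fintype.piFinset fun _ : Fin k => A)).filter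
    (fun p => (∑ i, p.1 i) = ∑ i, p.2 i)).card

open scoped Classical in
/-- `S_k(A)`: solutions with the `x_i` pairwise distinct and the `y_i` pairwise distinct. -/
noncomputable def Scount (k : ℕ) (A : Finset ℤ) : ℕ :=
  (((Fintype.piFinset fun _ : Fin k => A) ×ˢ (Fintype.piFinset fun _ : Fin k => A)).filter
    (fun p => (∑ i, p.1 i) = (∑ i, p.2 i) ∧ Function.Injective p.1 ∧ Function.Injective p.2)).card

open scoped Classical in
/-- `S_k^*(A₁, A₂)`: solutions with `x ∈ A₁^k`, `y ∈ A₂^k` and all `2k` entries pairwise distinct. -/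
noncomputable def Sstar2 (k : ℕ) (A₁ A₂ : Finset ℤ) : ℕ :=
  (((Fintype.piFinset fun _ : Fin k => A₁) ×ˢ (Fintype.piFinset fun _ : Fin k => A₂)).filter
    (fun p => (∑ i, p.1 i) = (∑ i, p.2 i) ∧ Function.Injective p.1 ∧ Function.Injective p.2 ∧
      ∀ i j, p.1 i ≠ p.2 j)).card

/-- `S_k^*(A)`. -/
noncomputable def Sstar (k : ℕ) (A : Finset ℤ) : ℕ := Sstar2 k A A

/-- `A` is a weak `B_k`-set (`B_k^*`-set): there is no solution of
`x₁+⋯+x_k = y₁+⋯+y_k` with all `2k` elements of `A` pairwise distinct. -/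
def IsWeakBkSet (k : ℕ) (A : Finset ℤ) : Prop :=
  ∀ x y : Fin k → ℤ, (∀ i, x i ∈ A) → (∀ i, y i ∈ A) →
    (∑ i, x i) = (∑ i, y i) → Function.Injective x → Function.Injective y →
      ∃ i j, x i = y j

namespace RuzsaAux

open MeasureTheory AddCircle

instance fact_one : Fact (0 < (1 : ℝ)) := ⟨one_pos⟩

noncomputable def ee (n : ℤ) (t : AddCircle (1 : ℝ)) : ℂ := fourier n t

lemma ee_cont (n : ℤ) : Continuous (ee n) := (fourier n).continuous

lemma ee_add (m n : ℤ) (t) : ee (m + n) t = ee m t * ee n t := by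
  simp [ee, fourier_add]

lemma ee_conj (n : ℤ) (t) : (starRingEnd ℂ) (ee n t) = ee (-n) t := by
  simp [ee, fourier_neg]

lemma ee_sum {ι : Type*} (s : Finset ι) (x : ι → ℤ) (t) :
    ee (∑ i ∈ s, x i) t = ∏ i ∈ s, ee (x i) t := by
  classical
  induction s using Finset.induction_on with
  | empty => simp [ee]
  | insert a s ha ih => rw [Finset.sum_insert ha, Finset.prod_insert ha, ee_add, ih]

lemma integ {E : Type*} [NormedAddCommGroup E] {f : AddCircle (1 : ℝ) → E} (hf : Continuous f) :
    Integrable f (haarAddCircle (T := 1)) :=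
  hf.integrable_of_hasCompactSupport (HasCompactSupport.of_compactSpace f)

lemma ee_int (n : ℤ) : ∫ t, ee n t ∂(haarAddCircle (T := 1)) = if n = 0 then 1 else 0 := by
  split_ifs with h
  · subst h; simp [ee]
  · exact integral_eq_zero_of_add_right_eq_neg (fourier_add_half_inv_index h one_pos)

noncomputable def FF {ι : Type*} (X : Finset ι) (φ : ι → ℤ) (t : AddCircle (1 : ℝ)) : ℂ :=
  ∑ x ∈ X, ee (φ x) t

lemma FF_cont {ι : Type*} (X : Finset ι) (φ : ι → ℤ) : Continuous (FF X φ) :=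
  continuous_finsetSum _ fun x _ => ee_cont _

lemma count_eq {ι κ : Type*} (X : Finset ι) (φ : ι → ℤ) (Y : Finset κ) (ψ : κ → ℤ) :
    ((((X ×ˢ Y).filter fun p => φ p.1 = ψ p.2).card : ℕ) : ℂ) =
      ∫ t, FF X φ t * (starRingEnd ℂ) (FF Y ψ t) ∂(haarAddCircle (T := 1)) := by
  have h : ∀ t, FF X φ t * (starRingEnd ℂ) (FF Y ψ t) =
      ∑ p ∈ X ×ˢ Y, ee (φ p.1 - ψ p.2) t := by
    intro t
    simp only [FF, map_sum, Finset.sum_mul_sum, Finset.sum_product, ee_conj, ← ee_add, sub_eq_add_neg]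
  simp only [h]
  rw [integral_finsetSum _ fun p _ => integ (ee_cont _)]
  simp only [ee_int, sub_eq_zero]
  simp

lemma count_diag {ι : Type*} (X : Finset ι) (φ : ι → ℤ) :
    ((((X ×ˢ X).filter fun p => φ p.1 = φ p.2).card : ℕ) : ℝ) =
      ∫ t, ‖FF X φ t‖ ^ 2 ∂(haarAddCircle (T := 1)) := by
  have h := count_eq X φ X φ
  simp only [Complex.mul_conj'] at h
  have h2 : ∀ t, ((‖FF X φ t‖ : ℂ)) ^ 2 = ((‖FF X φ t‖ ^ 2 : ℝ) : ℂ) := by intro t; push_cast; rfl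
  simp only [h2] at h
  rw [integral_complex_ofReal] at h
  exact_mod_cast h

lemma count_le {ι κ : Type*} (X : Finset ι) (φ : ι → ℤ) (Y : Finset κ) (ψ : κ → ℤ) :
    ((((X ×ˢ Y).filter fun p => φ p.1 = ψ p.2).card : ℕ) : ℝ) ≤
      ∫ t, ‖FF X φ t‖ * ‖FF Y ψ t‖ ∂(haarAddCircle (T := 1)) := by
  have h := count_eq X φ Y ψ
  have h2 := norm_integral_le_integral_norm (μ := haarAddCircle (T := 1))
    (fun t => FF X φ t * (starRingEnd ℂ) (FF Y ψ t))
  rw [← h] at h2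
  simpa using h2

abbrev tup (A : Finset ℤ) (m : ℕ) : Finset (Fin m → ℤ) := Fintype.piFinset fun _ : Fin m => A

lemma FF_lin (A : Finset ℤ) (m : ℕ) (c : Fin m → ℤ) (t) :
    FF (tup A m) (fun z => ∑ l, c l * z l) t = ∏ l, FF A (fun a => c l * a) t := by
  simp only [FF, ee_sum]
  rw [Finset.prod_univ_sum]

lemma Mcount_eq' (A : Finset ℤ) (m : ℕ) (c : ℤ) (hc : c ≠ 0) :
    (Mcount m A : ℝ) = ∫ t, (‖FF A (fun a => c * a) t‖ ^ m) ^ 2 ∂(haarAddCircle (T := 1)) := by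
  have h := count_diag (tup A m) (fun z => ∑ l, c * z l)
  have h2 : ∀ t, ‖FF (tup A m) (fun z => ∑ l, c * z l) t‖ = ‖FF A (fun a => c * a) t‖ ^ m := by
    intro t
    rw [FF_lin A m (fun _ => c) t]; simp
  simp only [h2] at h
  rw [← h, Mcount]
  congr 2
  ext p
  simp [← Finset.mul_sum, hc]

/-- counting with doubled coordinates -/
lemma T_le (A : Finset ℤ) (m : ℕ) (i j : Fin m) :
    ((((tup A m ×ˢ tup A m).filter fun p => p.1 i + ∑ l, p.1 l = p.2 j + ∑ l, p.2 l).card : ℕ) : ℝ)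
      ≤ 2 * Mcount m A := by
  classical
  have key : ∀ (i : Fin m) (z : Fin m → ℤ),
      z i + ∑ l, z l = ∑ l, (if l = i then 2 else 1) * z l := by
    intro i z
    have : ∀ l, (if l = i then (2 : ℤ) else 1) * z l = (if l = i then z l else 0) + z l := by
      intro l; split_ifs <;> ring
    simp [this, Finset.sum_add_distrib]
  simp only [key]
  have hb : ∀ (i : Fin m) t, ‖FF (tup A m) (fun z => ∑ l, (if l = i then 2 else 1) * z l) t‖ ≤
      (max ‖FF A (fun a => 1 * a) t‖ ‖FF A (fun a => 2 * a) t‖) ^ m := by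
    intro i t
    rw [FF_lin A m (fun l => if l = i then 2 else 1) t, norm_prod]
    refine (Finset.prod_le_prod (fun _ _ => norm_nonneg _) (g := fun _ =>
      max ‖FF A (fun a => 1 * a) t‖ ‖FF A (fun a => 2 * a) t‖) ?_).trans (by simp)
    intro l _
    split_ifs
    · exact le_max_right _ _
    · exact le_max_left _ _
  refine (count_le _ (fun z : Fin m → ℤ => ∑ l, (if l = i then 2 else 1) * z l) _
    (fun z : Fin m → ℤ => ∑ l, (if l = j then 2 else 1) * z l)).trans ?_
  have h1 := Mcount_eq' A m 1 (by norm_num)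
  have h2 := Mcount_eq' A m 2 (by norm_num)
  have c1 : ∀ c : ℤ, Continuous fun t => (‖FF A (fun a => c * a) t‖ ^ m) ^ 2 := fun c =>
    (((FF_cont A _).norm).pow m).pow 2
  rw [two_mul]
  nth_rw 1 [h1]
  rw [h2, ← integral_add (integ (c1 1)) (integ (c1 2))]
  refine integral_mono (integ ((FF_cont _ _).norm.mul (FF_cont _ _).norm))
    (integ ((c1 1).add (c1 2))) ?_
  intro t
  dsimp only
  have := mul_le_mul (hb i t) (hb j t) (norm_nonneg _) (by positivity)
  refine this.trans ?_
  rcases max_choice ‖FF A (fun a => 1 * a) t‖ ‖FF A (fun a => 2 * a) t‖ with h | h <;> rw [h]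
  · nlinarith [sq_nonneg (‖FF A (fun a => 2 * a) t‖ ^ m)]
  · nlinarith [sq_nonneg (‖FF A (fun a => 1 * a) t‖ ^ m)]

lemma M_succ (A : Finset ℤ) (m : ℕ) : A.card * Mcount m A ≤ Mcount (m + 1) A := by
  classical
  unfold Mcount
  rw [← Finset.card_product]
  refine Finset.card_le_card_of_injOn
    (fun q => (Fin.cons q.1 q.2.1, Fin.cons q.1 q.2.2)) ?_ ?_
  · rintro ⟨a, x, y⟩ h
    simp only [Finset.coe_product, Set.mem_prod, Finset.mem_coe, Finset.mem_filter,
      Finset.mem_product, Fintype.mem_piFinset] at h ⊢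
    refine ⟨⟨?_, ?_⟩, ?_⟩
    · intro i; refine Fin.cases ?_ (fun i => ?_) i
      · simpa using h.1
      · simpa using h.2.1.1 i
    · intro i; refine Fin.cases ?_ (fun i => ?_) i
      · simpa using h.1
      · simpa using h.2.1.2 i
    · simp [Fin.sum_univ_succ, h.2.2]
  · rintro ⟨a, x, y⟩ _ ⟨b, z, w⟩ _ h
    simp only [Prod.mk.injEq, Fin.cons_inj] at h
    simp [h.1.1, h.1.2, h.2.2]

open scoped Classical in
noncomputable def Dcount (k : ℕ) (A : Finset ℤ) : ℕ :=
  ((((tup A k).filter fun x => ¬ Function.Injective x) ×ˢ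
    ((tup A k).filter fun x => ¬ Function.Injective x)).filter
    (fun p => (∑ i, p.1 i) = ∑ i, p.2 i)).card

lemma M_le_SD (k : ℕ) (A : Finset ℤ) :
    (Mcount k A : ℝ) ≤ 3 / 2 * Scount k A + 3 * Dcount k A := by
  classical
  let φ : (Fin k → ℤ) → ℤ := fun x => ∑ i, x i
  have hM := count_diag (tup A k) φ
  have hS := count_diag ((tup A k).filter fun x => Function.Injective x) φ
  have hD := count_diag ((tup A k).filter fun x => ¬ Function.Injective x) φ
  have eM : (Mcount k A : ℝ) = ∫ t, ‖FF (tup A k) φ t‖ ^ 2 ∂(haarAddCircle (T := 1)) := by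
    rw [← hM, Mcount]
  have eS : (Scount k A : ℝ) = ∫ t, ‖FF ((tup A k).filter fun x => Function.Injective x) φ t‖ ^ 2
      ∂(haarAddCircle (T := 1)) := by
    rw [← hS, Scount]
    congr 2
    ext p
    simp only [Finset.mem_filter, Finset.mem_product, φ]
    tauto
  have eD : (Dcount k A : ℝ) = ∫ t, ‖FF ((tup A k).filter fun x => ¬ Function.Injective x) φ t‖ ^ 2
      ∂(haarAddCircle (T := 1)) := by
    rw [← hD, Dcount]
  rw [eM, eS, eD, ← integral_const_mul, ← integral_const_mul]
  have cc : ∀ X : Finset (Fin k → ℤ), Continuous fun t => ‖FF X φ t‖ ^ 2 := fun X =>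
    (FF_cont X φ).norm.pow 2
  rw [← integral_add (integ ((cc _).const_mul _)) (integ ((cc _).const_mul _))]
  refine integral_mono (integ (cc _)) (integ (((cc _).const_mul _).add ((cc _).const_mul _))) ?_
  intro t
  dsimp only
  have hs : FF (tup A k) φ t = FF ((tup A k).filter fun x => Function.Injective x) φ t +
      FF ((tup A k).filter fun x => ¬ Function.Injective x) φ t :=
    (Finset.sum_filter_add_sum_filter_not _ _ _).symm
  rw [hs]
  generalize FF ((tup A k).filter fun x => Function.Injective x) φ t = a
  generalize FF ((tup A k).filter fun x => ¬ Function.Injective x) φ t = b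
  have := norm_add_le a b
  have h0 := norm_nonneg (a + b)
  nlinarith [sq_nonneg (‖a‖ - 2 * ‖b‖)]

/-- pairs `i<j` -/
def PP (k : ℕ) : Finset (Fin k × Fin k) := Finset.univ.filter fun p => p.1 < p.2

lemma PP_card (k : ℕ) : 2 * (PP k).card ≤ k ^ 2 := by
  classical
  have h1 : (PP k).card = ((PP k).image Prod.swap).card :=
    (Finset.card_image_of_injective _ Prod.swap_injective).symm
  have hd : Disjoint (PP k) ((PP k).image Prod.swap) := by
    rw [Finset.disjoint_left]
    rintro ⟨a, b⟩ h h'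
    simp [PP] at h h'
    omega
  have := Finset.card_le_univ (PP k ∪ (PP k).image Prod.swap)
  rw [Finset.card_union_of_disjoint hd, ← h1] at this
  simp at this
  nlinarith

lemma N_le (m : ℕ) (A : Finset ℤ) (i j i' j' : Fin (m + 1)) (h : i ≠ j) (h' : i' ≠ j') :
    ((((tup A (m+1) ×ˢ tup A (m+1)).filter fun p => (∑ l, p.1 l = ∑ l, p.2 l) ∧ p.1 i = p.1 j ∧
      p.2 i' = p.2 j').card : ℕ) : ℝ) ≤ 2 * Mcount m A := by
  classical
  obtain ⟨u, rfl⟩ := Fin.exists_succAbove_eq h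
  obtain ⟨v, rfl⟩ := Fin.exists_succAbove_eq h'
  refine le_trans ?_ (T_le A m u v)
  norm_cast
  refine Finset.card_le_card_of_injOn (fun p => (j.removeNth p.1, j'.removeNth p.2)) ?_ ?_
  · rintro ⟨x, y⟩ hp
    simp only [Finset.mem_coe, Finset.mem_filter, Finset.mem_product, Fintype.mem_piFinset] at hp ⊢
    obtain ⟨⟨hx, hy⟩, hs, e1, e2⟩ := hp
    refine ⟨⟨fun l => hx _, fun l => hy _⟩, ?_⟩
    rw [Fin.sum_univ_succAbove x j, Fin.sum_univ_succAbove y j'] at hs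
    simp only [Fin.removeNth, e1, e2]
    exact hs
  · rintro ⟨x, y⟩ hp ⟨z, w⟩ hq e
    simp only [Finset.mem_coe, Finset.mem_filter] at hp hq
    simp only [Prod.mk.injEq] at e
    have e1 := fun l => congrFun e.1 l
    have e2 := fun l => congrFun e.2 l
    simp only [Fin.removeNth] at e1 e2
    simp only [Prod.mk.injEq]
    constructor
    · funext l
      rcases Fin.eq_self_or_eq_succAbove j l with rfl | ⟨r, rfl⟩
      · rw [← hp.2.2.1, ← hq.2.2.1, e1]
      · exact e1 r
    · funext l
      rcases Fin.eq_self_or_eq_succAbove j' l with rfl | ⟨r, rfl⟩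
      · rw [← hp.2.2.2, ← hq.2.2.2, e2]
      · exact e2 r

lemma D_le (m : ℕ) (A : Finset ℤ) :
    (Dcount (m + 1) A : ℝ) ≤ ((PP (m+1)).card : ℝ) ^ 2 * (2 * Mcount m A) := by
  classical
  have hex : ∀ x : Fin (m+1) → ℤ, ¬ Function.Injective x → ∃ p ∈ PP (m+1), x p.1 = x p.2 := by
    intro x hx
    simp only [Function.Injective, not_forall] at hx
    obtain ⟨a, b, e, ne⟩ := hx
    rcases lt_or_gt_of_ne ne with h | h
    · exact ⟨(a, b), by simp [PP, h], e⟩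
    · exact ⟨(b, a), by simp [PP, h], e.symm⟩
  have hsub : Dcount (m+1) A ≤ ((PP (m+1) ×ˢ PP (m+1)).biUnion fun q =>
      (tup A (m+1) ×ˢ tup A (m+1)).filter fun p => (∑ l, p.1 l = ∑ l, p.2 l) ∧
        p.1 q.1.1 = p.1 q.1.2 ∧ p.2 q.2.1 = p.2 q.2.2).card := by
    refine Finset.card_le_card ?_
    rintro ⟨x, y⟩ hp
    simp only [Finset.mem_filter, Finset.mem_product] at hp
    obtain ⟨⟨⟨hx, nx⟩, hy, ny⟩, hs⟩ := hp
    obtain ⟨p, hp, ep⟩ := hex x nx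
    obtain ⟨q, hq, eq⟩ := hex y ny
    simp only [Finset.mem_biUnion, Finset.mem_filter, Finset.mem_product]
    exact ⟨(p, q), ⟨hp, hq⟩, ⟨hx, hy⟩, hs, ep, eq⟩
  have h2 := hsub.trans Finset.card_biUnion_le
  have h3 : (Dcount (m+1) A : ℝ) ≤ _ := Nat.cast_le.mpr h2
  refine h3.trans ?_
  rw [Nat.cast_sum]
  refine (Finset.sum_le_card_nsmul _ _ (2 * (Mcount m A : ℝ)) ?_).trans ?_
  · rintro ⟨p, q⟩ h
    simp only [PP, Finset.mem_product, Finset.mem_filter] at h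
    exact N_le m A p.1 p.2 q.1 q.2 h.1.2.ne h.2.2.ne
  · rw [Finset.card_product, nsmul_eq_mul]; push_cast; rw [pow_two]

end RuzsaAux

theorem Sk_Mk_comparison (k : ℕ) (hk : 1 ≤ k) (A : Finset ℤ) (hA : 16 * k ^ 4 ≤ A.card) :
    Scount k A ≤ Mcount k A ∧ Mcount k A ≤ 2 * Scount k A := by
  classical
  constructor
  · unfold Scount Mcount
    refine Finset.card_le_card ?_
    intro p hp
    simp only [Finset.mem_filter] at hp ⊢
    exact ⟨hp.1, hp.2.1⟩
  · obtain ⟨m, rfl⟩ : ∃ m, k = m + 1 := ⟨k - 1, by omega⟩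
    have h1 := RuzsaAux.M_le_SD (m + 1) A
    have h2 := RuzsaAux.D_le m A
    have h3 : (A.card : ℝ) * Mcount m A ≤ Mcount (m + 1) A := by
      exact_mod_cast RuzsaAux.M_succ A m
    have h4 : 2 * ((RuzsaAux.PP (m + 1)).card : ℝ) ≤ ((m + 1 : ℕ) : ℝ) ^ 2 := by
      exact_mod_cast RuzsaAux.PP_card (m + 1)
    have h5 : 16 * ((m + 1 : ℕ) : ℝ) ^ 4 ≤ (A.card : ℝ) := by exact_mod_cast hA
    have h6 : (2 * ((RuzsaAux.PP (m + 1)).card : ℝ)) ^ 2 ≤ (((m + 1 : ℕ) : ℝ) ^ 2) ^ 2 :=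
      pow_le_pow_left₀ (by positivity) h4 2
    have h7 : 64 * ((RuzsaAux.PP (m + 1)).card : ℝ) ^ 2 ≤ (A.card : ℝ) := by nlinarith
    have h8 : 64 * ((RuzsaAux.PP (m + 1)).card : ℝ) ^ 2 * Mcount m A ≤ (A.card : ℝ) * Mcount m A :=
      mul_le_mul_of_nonneg_right h7 (Nat.cast_nonneg _)
    have h9 : (0 : ℝ) ≤ Scount (m + 1) A := Nat.cast_nonneg _
    have : (Mcount (m + 1) A : ℝ) ≤ 2 * Scount (m + 1) A := by linarith
    exact_mod_cast this
end

section
/- Let 1 ≤ l < k and let A be a B_k*-set with |A| ≥ 16k^4. Then S_k ≤ (√2·k)^{2(k−l)} · |A|^{k−l} · S_l. -/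
open Finset

section
open scoped Classical ComplexConjugate
noncomputable def ee (m : ℤ) (t : ℝ) : ℂ := Complex.exp (2 * Real.pi * Complex.I * m * t)

lemma ee_sum {ι : Type*} (s : Finset ι) (u : ι → ℤ) (t : ℝ) :
    ∏ i ∈ s, ee (u i) t = ee (∑ i ∈ s, u i) t := by
  unfold ee
  rw [← Complex.exp_sum]
  congr 1
  push_cast
  rw [Finset.mul_sum, Finset.sum_mul]

lemma ee_mul_conj (m n : ℤ) (t : ℝ) : ee m t * conj (ee n t) = ee (m - n) t := by
  unfold ee
  rw [← Complex.exp_conj, ← Complex.exp_add]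
  congr 1
  simp [map_ofNat]
  ring

lemma ee_mul (m n : ℤ) (t : ℝ) : ee m t * ee n t = ee (m + n) t := by
  unfold ee
  rw [← Complex.exp_add]
  congr 1
  push_cast
  ring

@[fun_prop]
lemma ee_cont (m : ℤ) : Continuous (ee m) := by unfold ee; fun_prop

lemma ee_int (m : ℤ) : ∫ t in (0:ℝ)..1, ee m t = if m = 0 then 1 else 0 := by
  split_ifs with h
  · simp [ee, h]
  · unfold ee
    rw [integral_exp_mul_complex (by simp [h, Real.pi_ne_zero])]
    have : Complex.exp (2 * Real.pi * Complex.I * m * (1:ℝ)) = 1 := by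
      rw [Complex.exp_eq_one_iff]; exact ⟨m, by push_cast; ring⟩
    rw [this]; simp

lemma int_sum {α β : Type*} (P : Finset α) (Q : Finset β) (u : α → ℤ) (v : β → ℤ) :
    ∫ t in (0:ℝ)..1, (∑ x ∈ P, ee (u x) t) * conj (∑ y ∈ Q, ee (v y) t)
      = (((P ×ˢ Q).filter (fun p => u p.1 = v p.2)).card : ℂ) := by
  simp_rw [map_sum, Finset.sum_mul_sum, ee_mul_conj]
  rw [intervalIntegral.integral_finsetSum]
  · simp_rw [Finset.card_filter, Finset.sum_product]
    push_cast
    refine Finset.sum_congr rfl fun x _ => ?_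
    rw [intervalIntegral.integral_finsetSum]
    · refine Finset.sum_congr rfl fun y _ => ?_
      rw [ee_int]
      simp only [sub_eq_zero]
    · intro y _
      exact (ee_cont _).intervalIntegrable _ _
  · intro x _
    exact (continuous_finsetSum _ fun y _ => ee_cont _).intervalIntegrable _ _

noncomputable def ff (A : Finset ℤ) (c : ℤ) (t : ℝ) : ℂ := ∑ a ∈ A, ee (c * a) t

@[fun_prop]
lemma ff_cont (A : Finset ℤ) (c : ℤ) : Continuous (ff A c) := by unfold ff; fun_prop

lemma ff_pow (A : Finset ℤ) (c : ℤ) (j : ℕ) (t : ℝ) :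
    ff A c t ^ j = ∑ x ∈ Fintype.piFinset (fun _ : Fin j => A), ee (c * ∑ i, x i) t := by
  have := Finset.prod_univ_sum (fun _ : Fin j => A) (fun _ a => ee (c * a) t)
  rw [Finset.prod_const, Finset.card_univ, Fintype.card_fin] at this
  rw [ff, this]
  refine Finset.sum_congr rfl fun x _ => ?_
  rw [ee_sum, Finset.mul_sum]

lemma M_int (A : Finset ℤ) (c : ℤ) (hc : c ≠ 0) (j : ℕ) :
    ∫ t in (0:ℝ)..1, ‖ff A c t‖ ^ (2 * j) = (Mcount j A : ℝ) := by
  have h := int_sum (Fintype.piFinset (fun _ : Fin j => A)) (Fintype.piFinset (fun _ : Fin j => A))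
    (fun x => c * ∑ i, x i) (fun x => c * ∑ i, x i)
  simp_rw [← ff_pow, Complex.mul_conj, Complex.normSq_eq_norm_sq, norm_pow, ← pow_mul,
    mul_comm j 2] at h
  rw [intervalIntegral.integral_ofReal] at h
  simp only [mul_right_inj' hc] at h
  rw [Mcount]
  exact_mod_cast h

lemma pair_sum (A : Finset ℤ) (j : ℕ) (a b : Fin j) (hab : a ≠ b) (t : ℝ) :
    ∑ x ∈ (Fintype.piFinset (fun _ : Fin j => A)).filter (fun x => x a = x b), ee (∑ i, x i) t
      = ff A 2 t * ff A 1 t ^ (j - 2) := by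
  have h := Finset.prod_univ_sum (fun _ : {i : Fin j // i ≠ b} => A)
    (Function.update (fun _ z => ee (1 * z) t) ⟨a, hab⟩ (fun z => ee (2 * z) t))
  have h1 : ∏ i : {i : Fin j // i ≠ b}, ∑ z ∈ A,
      (Function.update (fun _ z => ee (1 * z) t) ⟨a, hab⟩ (fun z => ee (2 * z) t) : {i : Fin j // i ≠ b} → ℤ → ℂ) i z
      = ff A 2 t * ff A 1 t ^ (j - 2) := by
    rw [Fintype.prod_eq_mul_prod_subtype_ne _ (⟨a, hab⟩ : {i : Fin j // i ≠ b})]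
    congr 1
    · simp [ff]
    · rw [Finset.prod_congr rfl (g := fun _ => ff A 1 t)]
      · rw [Finset.prod_const, Finset.card_univ]
        congr 1
        simp [Fintype.card_subtype_compl]
        omega
      · intro i _
        rw [Function.update_of_ne i.2]; rfl
  rw [← h1, h]
  refine Finset.sum_nbij' (fun x i => x i.1)
    (fun z i => if h : i = b then z ⟨a, hab⟩ else z ⟨i, h⟩) ?_ ?_ ?_ ?_ ?_
  · intro x hx
    simp only [Finset.mem_filter, Fintype.mem_piFinset] at hx ⊢
    exact fun i => hx.1 i
  · intro z hz
    simp only [Finset.mem_filter, Fintype.mem_piFinset] at hz ⊢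
    refine ⟨fun i => ?_, by simp [hab]⟩
    split_ifs <;> exact hz _
  · intro x hx
    simp only [Finset.mem_filter, Fintype.mem_piFinset] at hx
    funext i
    by_cases h : i = b
    · simp [h, hx.2]
    · simp [h]
  · intro z hz
    funext i
    simp [i.2]
  · intro x hx
    simp only [Finset.mem_filter, Fintype.mem_piFinset] at hx
    rw [← ee_sum, Fintype.prod_eq_mul_prod_subtype_ne _ b,
      Fintype.prod_eq_mul_prod_subtype_ne _ (⟨a, hab⟩ : {i : Fin j // i ≠ b}),
      Fintype.prod_eq_mul_prod_subtype_ne (fun i : {i : Fin j // i ≠ b} => (Function.update (fun _ z => ee (1 * z) t) ⟨a, hab⟩ (fun z => ee (2 * z) t) : {i : Fin j // i ≠ b} → ℤ → ℂ) i (x i.1)) (⟨a, hab⟩ : {i : Fin j // i ≠ b}), ← mul_assoc]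
    congr 1
    · simp only [Function.update_self]
      rw [ee_mul, hx.2]; congr 1; ring
    · refine Finset.prod_congr rfl fun i _ => ?_
      rw [Function.update_of_ne i.2, one_mul]

noncomputable def Pc (A : Finset ℤ) (j : ℕ) (a b : Fin j) : ℕ :=
  (((Fintype.piFinset fun _ : Fin j => A) ×ˢ (Fintype.piFinset fun _ : Fin j => A)).filter
    (fun p => (∑ i, p.1 i) = (∑ i, p.2 i) ∧ p.1 a = p.1 b)).card

lemma M_ge (A : Finset ℤ) (j : ℕ) : A.card ^ j ≤ Mcount j A := by
  have : (Fintype.piFinset fun _ : Fin j => A).card = A.card ^ j := by simp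
  rw [← this, Mcount]
  refine Finset.card_le_card_of_injOn (fun x => (x, x)) ?_ ?_
  · intro x hx
    simpa using hx
  · intro x _ y _ h
    exact (Prod.ext_iff.1 h).1

lemma aux_pow (X Y : ℝ) (hX : 0 ≤ X) (hY : 0 ≤ Y) (m : ℕ) : X ^ m * Y ≤ X ^ (m + 1) + Y ^ (m + 1) := by
  rcases le_total X Y with h | h
  · have : X ^ m * Y ≤ Y ^ m * Y := by gcongr
    have h2 : 0 ≤ X ^ (m+1) := by positivity
    rw [pow_succ Y]; linarith
  · have : X ^ m * Y ≤ X ^ m * X := by gcongr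
    have h2 : 0 ≤ Y ^ (m+1) := by positivity
    rw [pow_succ X]; linarith

lemma Pc_le (A : Finset ℤ) (j : ℕ) (a b : Fin j) (hab : a ≠ b) (s : ℕ) (hs : s ^ 2 ≤ A.card) :
    s * Pc A j a b ≤ 2 * Mcount j A := by
  have h := int_sum ((Fintype.piFinset (fun _ : Fin j => A)).filter (fun x => x a = x b))
    (Fintype.piFinset (fun _ : Fin j => A)) (fun x => ∑ i, x i) (fun x => 1 * ∑ i, x i)
  simp_rw [← ff_pow, pair_sum A j a b hab, one_mul] at h
  have hc : (((Fintype.piFinset (fun _ : Fin j => A)).filter (fun x => x a = x b) ×ˢ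
    (Fintype.piFinset (fun _ : Fin j => A))).filter (fun p => ∑ i, p.1 i = ∑ i, p.2 i)).card
      = Pc A j a b := by
    unfold Pc
    congr 1
    ext p
    simp only [Finset.mem_filter, Finset.mem_product]
    tauto
  rw [hc] at h
  obtain ⟨m, rfl⟩ : ∃ m, j = m + 2 := ⟨j - 2, by have := a.2; have := b.2; have : (a:ℕ) ≠ b := fun h => hab (Fin.ext h); omega⟩
  have h1 : (Pc A (m+2) a b : ℝ) ≤ ∫ t in (0:ℝ)..1, ‖ff A 2 t‖ * ‖ff A 1 t‖ ^ (2 * m + 2) := by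
    have := congrArg norm h
    rw [Complex.norm_natCast] at this
    rw [← this]
    refine (intervalIntegral.norm_integral_le_integral_norm zero_le_one).trans (le_of_eq ?_)
    congr 1
    funext t
    simp only [norm_mul, norm_pow, RCLike.norm_conj, Nat.add_sub_cancel]
    ring
  have h2 : ∫ t in (0:ℝ)..1, (s:ℝ) * (‖ff A 2 t‖ * ‖ff A 1 t‖ ^ (2 * m + 2)) ≤
     ∫ t in (0:ℝ)..1, (‖ff A 1 t‖ ^ (2 * (m+2)) + (s:ℝ) ^ (2 * (m+2)) / 2 + ‖ff A 2 t‖ ^ (2 * (m+2)) / 2) := by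
    apply intervalIntegral.integral_mono_on zero_le_one
    · exact Continuous.intervalIntegrable (by fun_prop) _ _
    · exact Continuous.intervalIntegrable (by fun_prop) _ _
    · intro t _
      set g := ‖ff A 2 t‖
      set f := ‖ff A 1 t‖
      have e1 := aux_pow (f^2) (g^2) (by positivity) (by positivity) (m+1)
      have e2 := aux_pow (f^2) ((s:ℝ)^2) (by positivity) (by positivity) (m+1)
      have e3 : (s:ℝ) * g * (f^2)^(m+1) ≤ ((s:ℝ)^2 + g^2)/2 * (f^2)^(m+1) := by
        gcongr
        nlinarith [sq_nonneg ((s:ℝ) - g)]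
      simp only [← pow_mul] at e1 e2 e3
      ring_nf at e1 e2 e3 ⊢
      linarith
  rw [intervalIntegral.integral_const_mul, intervalIntegral.integral_add, intervalIntegral.integral_add,
    intervalIntegral.integral_div, intervalIntegral.integral_div, M_int A 1 one_ne_zero, M_int A 2 two_ne_zero] at h2
  rotate_left
  · exact Continuous.intervalIntegrable (by fun_prop) _ _
  · exact Continuous.intervalIntegrable (by fun_prop) _ _
  · exact Continuous.intervalIntegrable (by fun_prop) _ _
  · exact Continuous.intervalIntegrable (by fun_prop) _ _
  have h3 : (s:ℝ) ^ (2 * (m+2)) ≤ Mcount (m+2) A := by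
    have : s ^ (2 * (m+2)) ≤ Mcount (m+2) A := by
      rw [pow_mul]
      exact (Nat.pow_le_pow_left hs _).trans (M_ge A _)
    exact_mod_cast this
  simp only [intervalIntegral.integral_const, smul_eq_mul] at h2
  have h4 := mul_le_mul_of_nonneg_left h1 (Nat.cast_nonneg (α := ℝ) s)
  have : (s:ℝ) * Pc A (m+2) a b ≤ 2 * Mcount (m+2) A := by linarith
  exact_mod_cast this

lemma Pc_swap (A : Finset ℤ) (j : ℕ) (a b : Fin j) :
  (((Fintype.piFinset fun _ : Fin j => A) ×ˢ (Fintype.piFinset fun _ : Fin j => A)).filter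
    (fun p => (∑ i, p.1 i) = (∑ i, p.2 i) ∧ p.2 a = p.2 b)).card = Pc A j a b := by
  unfold Pc
  refine Finset.card_nbij' Prod.swap Prod.swap ?_ ?_ ?_ ?_
  · intro p hp
    simp at hp ⊢
    exact ⟨⟨hp.1.2, hp.1.1⟩, hp.2.1.symm, hp.2.2⟩
  · intro p hp
    simp at hp ⊢
    exact ⟨⟨hp.1.2, hp.1.1⟩, hp.2.1.symm, hp.2.2⟩
  · intro p _; simp
  · intro p _; simp

lemma not_inj {j : ℕ} (x : Fin j → ℤ) (h : ¬ Function.Injective x) : ∃ a b, a < b ∧ x a = x b := by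
  simp only [Function.Injective, not_forall] at h
  obtain ⟨a, b, h, hne⟩ := h
  rcases lt_or_gt_of_ne hne with h' | h'
  · exact ⟨a, b, h', h⟩
  · exact ⟨b, a, h', h.symm⟩

lemma pairs_card (j : ℕ) : 2 * ((Finset.univ : Finset (Fin j × Fin j)).filter (fun q => q.1 < q.2)).card ≤ j ^ 2 := by
  have h1 : ((Finset.univ : Finset (Fin j × Fin j)).filter (fun q => q.1 < q.2)).card
    = ((Finset.univ : Finset (Fin j × Fin j)).filter (fun q => q.2 < q.1)).card := by
    refine Finset.card_nbij' Prod.swap Prod.swap ?_ ?_ ?_ ?_ <;> intro p <;> simp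
  have h2 : (((Finset.univ : Finset (Fin j × Fin j)).filter (fun q => q.1 < q.2)) ∪
    ((Finset.univ : Finset (Fin j × Fin j)).filter (fun q => q.2 < q.1))).card ≤ j ^ 2 := by
    refine (Finset.card_le_univ _).trans ?_
    simp [sq]
  rw [Finset.card_union_of_disjoint] at h2
  · omega
  · rw [Finset.disjoint_filter]
    intro q _ h
    exact h.not_gt

lemma M_le_S_add (A : Finset ℤ) (j : ℕ) : Mcount j A ≤ Scount j A +
    ∑ q ∈ (Finset.univ : Finset (Fin j × Fin j)).filter (fun q => q.1 < q.2), 2 * Pc A j q.1 q.2 := by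
  have hsub : ((Fintype.piFinset fun _ : Fin j => A) ×ˢ (Fintype.piFinset fun _ : Fin j => A)).filter
    (fun p => (∑ i, p.1 i) = ∑ i, p.2 i) ⊆
    ((Fintype.piFinset fun _ : Fin j => A) ×ˢ (Fintype.piFinset fun _ : Fin j => A)).filter
    (fun p => (∑ i, p.1 i) = (∑ i, p.2 i) ∧ Function.Injective p.1 ∧ Function.Injective p.2) ∪
    ((Finset.univ : Finset (Fin j × Fin j)).filter (fun q => q.1 < q.2)).biUnion (fun q =>
      ((Fintype.piFinset fun _ : Fin j => A) ×ˢ (Fintype.piFinset fun _ : Fin j => A)).filter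
    (fun p => (∑ i, p.1 i) = (∑ i, p.2 i) ∧ p.1 q.1 = p.1 q.2) ∪
      ((Fintype.piFinset fun _ : Fin j => A) ×ˢ (Fintype.piFinset fun _ : Fin j => A)).filter
    (fun p => (∑ i, p.1 i) = (∑ i, p.2 i) ∧ p.2 q.1 = p.2 q.2)) := by
    intro p hp
    simp only [Finset.mem_union, Finset.mem_biUnion, Finset.mem_filter, Finset.mem_univ, true_and] at hp ⊢
    by_cases h1 : Function.Injective p.1
    · by_cases h2 : Function.Injective p.2
      · exact Or.inl ⟨hp.1, hp.2, h1, h2⟩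
      · obtain ⟨a, b, hab, h⟩ := not_inj _ h2
        exact Or.inr ⟨(a, b), hab, Or.inr ⟨hp.1, hp.2, h⟩⟩
    · obtain ⟨a, b, hab, h⟩ := not_inj _ h1
      exact Or.inr ⟨(a, b), hab, Or.inl ⟨hp.1, hp.2, h⟩⟩
  refine (Finset.card_le_card hsub).trans ((Finset.card_union_le _ _).trans ?_)
  refine Nat.add_le_add le_rfl (Finset.card_biUnion_le.trans (Finset.sum_le_sum fun q _ => ?_))
  refine (Finset.card_union_le _ _).trans ?_
  rw [Pc_swap, two_mul]
  rfl

lemma M_le_S (A : Finset ℤ) (j k : ℕ) (hk : 1 ≤ k) (hjk : j ≤ k) (hA : 16 * k ^ 4 ≤ A.card) :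
    Mcount j A ≤ 2 * Scount j A := by
  have h := M_le_S_add A j
  have hs : (4 * k ^ 2) ^ 2 ≤ A.card := by rw [mul_pow, ← pow_mul]; exact hA
  have h1 : 4 * k ^ 2 * ∑ q ∈ (Finset.univ : Finset (Fin j × Fin j)).filter (fun q => q.1 < q.2), 2 * Pc A j q.1 q.2
     ≤ 2 * k ^ 2 * Mcount j A := by
    rw [Finset.mul_sum]
    have : ∀ q ∈ (Finset.univ : Finset (Fin j × Fin j)).filter (fun q => q.1 < q.2),
      4 * k ^ 2 * (2 * Pc A j q.1 q.2) ≤ 4 * Mcount j A := by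
      intro q hq
      have := Pc_le A j q.1 q.2 (ne_of_lt (Finset.mem_filter.1 hq).2) _ hs
      linarith
    refine (Finset.sum_le_card_nsmul _ _ _ this).trans ?_
    have hc := pairs_card j
    have : j ^ 2 ≤ k ^ 2 := Nat.pow_le_pow_left hjk 2
    rw [smul_eq_mul, ← mul_assoc]
    apply Nat.mul_le_mul_right
    omega
  have hk2 : 0 < 2 * k ^ 2 := by positivity
  have h2 : 2 * ∑ q ∈ (Finset.univ : Finset (Fin j × Fin j)).filter (fun q => q.1 < q.2), 2 * Pc A j q.1 q.2
     ≤ Mcount j A := by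
    apply Nat.le_of_mul_le_mul_left _ hk2
    linarith
  omega

lemma S_le_M (A : Finset ℤ) (j : ℕ) : Scount j A ≤ Mcount j A := by
  refine Finset.card_le_card fun p hp => ?_
  simp only [Finset.mem_filter] at hp ⊢
  exact ⟨hp.1, hp.2.1⟩

lemma S_rec (A : Finset ℤ) (m : ℕ) (hw : IsWeakBkSet (m+1) A) :
    Scount (m+1) A ≤ (m+1)^2 * A.card * Scount m A := by
  set T := ((Fintype.piFinset fun _ : Fin m => A) ×ˢ (Fintype.piFinset fun _ : Fin m => A)).filter
    (fun p => (∑ i, p.1 i) = (∑ i, p.2 i) ∧ Function.Injective p.1 ∧ Function.Injective p.2) with hT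
  have hTc : T.card = Scount m A := rfl
  have : (m+1)^2 * A.card * Scount m A =
    ((Finset.univ : Finset (Fin (m+1) × Fin (m+1))) ×ˢ (A ×ˢ T)).card := by
    rw [Finset.card_product, Finset.card_product, hTc]
    simp [sq, mul_assoc]
  rw [this, Scount]
  refine Finset.card_le_card_of_surjOn
    (fun w => (Fin.insertNth w.1.1 w.2.1 w.2.2.1, Fin.insertNth w.1.2 w.2.1 w.2.2.2)) ?_
  intro p hp
  simp only [Finset.coe_filter, Set.mem_ofPred_eq, Finset.mem_product, Fintype.mem_piFinset] at hp
  obtain ⟨⟨hx, hy⟩, hs, h1, h2⟩ := hp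
  obtain ⟨i, j, hij⟩ := hw p.1 p.2 hx hy hs h1 h2
  refine ⟨((i, j), (p.1 i, (i.removeNth p.1, j.removeNth p.2))), ?_, ?_⟩
  · simp only [Finset.coe_product, Set.mem_prod, Finset.mem_coe, hT, Finset.mem_filter,
      Finset.mem_product, Fintype.mem_piFinset, Finset.mem_univ, true_and]
    rw [Fin.sum_univ_succAbove _ i, Fin.sum_univ_succAbove p.2 j, hij] at hs
    refine ⟨hx i, ⟨fun _ => hx _, fun _ => hy _⟩, add_left_cancel hs, ?_, ?_⟩
    · exact h1.comp Fin.succAbove_right_injective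
    · exact h2.comp Fin.succAbove_right_injective
  · refine Prod.ext ?_ ?_
    · simp
    · simp [hij]

lemma M_step (A : Finset ℤ) (j : ℕ) (R : ℝ) (hR : 0 < R)
    (h : (Mcount (j+2) A : ℝ) ≤ R * Mcount (j+1) A) : (Mcount (j+1) A : ℝ) ≤ R * Mcount j A := by
  have h0 : 0 ≤ ∫ t in (0:ℝ)..1, ‖ff A 1 t‖ ^ (2 * j) * (R - ‖ff A 1 t‖ ^ 2) ^ 2 := by
    apply intervalIntegral.integral_nonneg zero_le_one
    intro t _
    positivity
  have he : ∀ t, ‖ff A 1 t‖ ^ (2 * j) * (R - ‖ff A 1 t‖ ^ 2) ^ 2 =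
    R ^ 2 * ‖ff A 1 t‖ ^ (2 * j) - 2 * R * ‖ff A 1 t‖ ^ (2 * (j + 1)) + ‖ff A 1 t‖ ^ (2 * (j + 2)) := by
    intro t; ring
  simp_rw [he] at h0
  rw [intervalIntegral.integral_add, intervalIntegral.integral_sub,
    intervalIntegral.integral_const_mul, intervalIntegral.integral_const_mul,
    M_int A 1 one_ne_zero, M_int A 1 one_ne_zero, M_int A 1 one_ne_zero] at h0
  · have : R * Mcount (j+1) A ≤ R * (R * Mcount j A) := by nlinarith
    exact le_of_mul_le_mul_left this hR
  all_goals exact Continuous.intervalIntegrable (by fun_prop) _ _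

lemma M_down (A : Finset ℤ) (R : ℝ) (hR : 0 < R) (d l : ℕ)
    (h : (Mcount (l+d+1) A : ℝ) ≤ R * Mcount (l+d) A) :
    (Mcount (l+d) A : ℝ) ≤ R ^ d * Mcount l A := by
  induction d with
  | zero => simp
  | succ d ih =>
    have h' := M_step A (l+d) R hR h
    refine h'.trans ?_
    have := mul_le_mul_of_nonneg_left (ih h') hR.le
    rw [pow_succ', mul_assoc]
    exact this

end

theorem Sk_le_Sl (k l : ℕ) (hl : 1 ≤ l) (hlk : l < k) (A : Finset ℤ)
    (hA : 16 * k ^ 4 ≤ A.card) (hweak : IsWeakBkSet k A) :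
    (Scount k A : ℝ) ≤ (Real.sqrt 2 * k) ^ (2 * (k - l)) * (A.card : ℝ) ^ (k - l) * (Scount l A : ℝ) := by
  obtain ⟨d, rfl⟩ : ∃ d, k = l + d + 1 := ⟨k - l - 1, by omega⟩
  have hn : 0 < A.card := lt_of_lt_of_le (by positivity) hA
  have hrec := S_rec A (l+d) hweak
  have hM1 := M_le_S A (l+d+1) (l+d+1) (by omega) le_rfl hA
  have hMl := M_le_S A l (l+d+1) (by omega) (by omega) hA
  have hS := S_le_M A (l+d)
  have e : l + d + 1 - l = d + 1 := by omega
  rw [e, pow_mul, ← mul_pow, mul_pow (Real.sqrt 2), Real.sq_sqrt zero_le_two]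
  set R : ℝ := 2 * ((l + d + 1 : ℕ) : ℝ) ^ 2 * A.card with hR
  have hR0 : 0 < R := by positivity
  have hrec' : (Scount (l+d+1) A : ℝ) ≤ R / 2 * Scount (l+d) A := by
    have : (Scount (l+d+1) A : ℝ) ≤ ((l + d + 1 : ℕ) : ℝ) ^ 2 * A.card * Scount (l+d) A := by
      exact_mod_cast hrec
    rw [hR]; linarith
  have hM1' : (Mcount (l+d+1) A : ℝ) ≤ 2 * Scount (l+d+1) A := by exact_mod_cast hM1
  have hMl' : (Mcount l A : ℝ) ≤ 2 * Scount l A := by exact_mod_cast hMl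
  have hS' : (Scount (l+d) A : ℝ) ≤ Mcount (l+d) A := by exact_mod_cast hS
  have h5 : R / 2 * Scount (l+d) A ≤ R / 2 * Mcount (l+d) A := by gcongr
  have h6 := M_down A R hR0 d l (by linarith)
  calc (Scount (l+d+1) A : ℝ) ≤ R / 2 * Mcount (l+d) A := hrec'.trans h5
    _ ≤ R / 2 * (R ^ d * (2 * Scount l A)) := by
      gcongr
      exact h6.trans (by gcongr)
    _ = R ^ (d+1) * Scount l A := by ring
end

section
/- Let A be a B_k*-set with |A| ≥ 20k^6. Then M_k(A) ≤ 2k · 8^k · k^{3k/2} · |A|^k, where M_k(A) is the number of solutions to x_1+...+x_k = y_1+...+y_k with all variables in A. -/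
open Finset

open scoped ComplexConjugate

noncomputable def DY (z : ℤ → ℂ) : ℕ → Finset ℤ → ℂ
  | 0, _ => 1
  | j+1, A => ∑ a ∈ A, conj (z a) * DY z j (A.erase a)

noncomputable def DD (z : ℤ → ℂ) : ℕ → ℕ → Finset ℤ → ℂ
  | 0, j, A => DY z j A
  | i+1, j, A => ∑ a ∈ A, z a * DD z i j (A.erase a)

theorem sum_erase_swap (A : Finset ℤ) (F : ℤ → ℤ → ℂ) :
    ∑ a ∈ A, ∑ b ∈ A.erase a, F a b = ∑ b ∈ A, ∑ a ∈ A.erase b, F a b := by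
  apply Finset.sum_comm'
  intro x y
  simp only [mem_erase]
  constructor
  · rintro ⟨h1, h2, h3⟩; exact ⟨⟨h2.symm, h1⟩, h3⟩
  · rintro ⟨⟨h1, h2⟩, h3⟩; exact ⟨h2, h1.symm, h3⟩

theorem DD_x (z : ℤ → ℂ) (i j : ℕ) (A : Finset ℤ) :
    DD z (i+1) j A = ∑ a ∈ A, z a * DD z i j (A.erase a) := rfl

theorem DD_00 (z : ℤ → ℂ) (A : Finset ℤ) : DD z 0 0 A = 1 := rfl

theorem DD_y (z : ℤ → ℂ) (i j : ℕ) (A : Finset ℤ) :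
    DD z i (j+1) A = ∑ a ∈ A, conj (z a) * DD z i j (A.erase a) := by
  induction i generalizing A with
  | zero => rfl
  | succ i ih =>
    simp only [DD_x, ih, mul_sum]
    rw [sum_erase_swap]
    refine sum_congr rfl fun b _ => sum_congr rfl fun a _ => ?_
    rw [erase_right_comm]; ring

theorem DD_conj (z : ℤ → ℂ) (i j : ℕ) (A : Finset ℤ) :
    conj (DD z i j A) = DD z j i A := by
  induction i generalizing A j with
  | zero =>
    induction j generalizing A with
    | zero => simp [DD_00]
    | succ j ih =>
      rw [DD_y, DD_x, map_sum]
      refine sum_congr rfl fun a _ => ?_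
      simp [ih]
  | succ i ih =>
    rw [DD_y, DD_x, map_sum]
    refine sum_congr rfl fun a _ => ?_
    simp [ih]

/-- splitting off one element -/
theorem DD_split (z : ℤ → ℂ) (i j : ℕ) (A : Finset ℤ) (a : ℤ) (ha : a ∈ A) :
    DD z i j A = DD z i j (A.erase a) + i * z a * DD z (i-1) j (A.erase a)
      + j * conj (z a) * DD z i (j-1) (A.erase a) := by
  induction i generalizing A j with
  | zero =>
    induction j generalizing A with
    | zero => simp [DD_00]
    | succ j ih =>
      rw [DD_y, ← Finset.add_sum_erase _ _ ha]
      have : ∀ b ∈ A.erase a, conj (z b) * DD z 0 j (A.erase b) =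
          conj (z b) * DD z 0 j ((A.erase a).erase b)
           + j * conj (z a) * (conj (z b) * DD z 0 (j-1) ((A.erase a).erase b)) := by
        intro b hb
        rw [ih (A.erase b) (by simp at hb ⊢; exact ⟨fun h => hb.1 h.symm, ha⟩), erase_right_comm]
        simp; ring
      rw [sum_congr rfl this, sum_add_distrib, ← mul_sum, ← DD_y]
      rcases j with _ | j
      · simp [DD_00]; ring
      · rw [show j + 1 - 1 = j by omega, ← DD_y]
        push_cast; simp; ring
  | succ i ih =>
    rw [DD_x, ← Finset.add_sum_erase _ _ ha]
    have : ∀ b ∈ A.erase a, z b * DD z i j (A.erase b) =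
          z b * DD z i j ((A.erase a).erase b)
           + i * z a * (z b * DD z (i-1) j ((A.erase a).erase b))
           + j * conj (z a) * (z b * DD z i (j-1) ((A.erase a).erase b)) := by
        intro b hb
        rw [ih j (A.erase b) (by simp at hb ⊢; exact ⟨fun h => hb.1 h.symm, ha⟩), erase_right_comm]
        ring
    rw [sum_congr rfl this, sum_add_distrib, sum_add_distrib, ← mul_sum, ← mul_sum,
      ← DD_x z i j, ← DD_x z i (j-1)]
    rcases i with _ | i
    · simp; ring
    · rw [show i + 1 - 1 = i by omega, ← DD_x z i j]
      push_cast; ring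

noncomputable def WW (z : ℤ → ℂ) (m i j : ℕ) (A : Finset ℤ) : ℂ :=
  ∑ a ∈ A, z a ^ m * DD z i j (A.erase a)

noncomputable def pp (z : ℤ → ℂ) (m : ℕ) (A : Finset ℤ) : ℂ := ∑ a ∈ A, z a ^ m

theorem WW_one (z : ℤ → ℂ) (i j : ℕ) (A : Finset ℤ) : WW z 1 i j A = DD z (i+1) j A := by
  simp [WW, DD_x]

theorem WW_zero (z : ℤ → ℂ) (i j : ℕ) (A : Finset ℤ) :
    WW z 0 i j A = ((A.card : ℂ) - i - j) * DD z i j A := by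
  simp only [WW, pow_zero, one_mul]
  induction i generalizing A j with
  | zero =>
    induction j generalizing A with
    | zero => simp [DD_00]
    | succ j ih =>
      simp only [DD_y]
      rw [sum_erase_swap, mul_sum]
      refine sum_congr rfl fun b hb => ?_
      have h1 : (1:ℕ) ≤ A.card := card_pos.mpr ⟨b, hb⟩
      have := ih (A.erase b)
      rw [card_erase_of_mem hb, Nat.cast_sub h1] at this
      rw [← mul_sum]
      simp only [erase_right_comm (a := b)] at *
      rw [this]; push_cast; ring
  | succ i ih =>
    simp only [DD_x]
    rw [sum_erase_swap, mul_sum]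
    refine sum_congr rfl fun b hb => ?_
    have h1 : (1:ℕ) ≤ A.card := card_pos.mpr ⟨b, hb⟩
    have := ih j (A.erase b)
    rw [card_erase_of_mem hb, Nat.cast_sub h1] at this
    rw [← mul_sum]
    simp only [erase_right_comm (a := b)] at *
    rw [this]; push_cast; ring

theorem WW_rec (z : ℤ → ℂ) (hz : ∀ a, z a * conj (z a) = 1) (m i j : ℕ) (A : Finset ℤ) :
    WW z (m+1) i j A = pp z (m+1) A * DD z i j A - i * WW z (m+2) (i-1) j A
      - j * WW z m i (j-1) A := by
  simp only [WW, pp, sum_mul, mul_sum]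
  rw [← sum_sub_distrib, ← sum_sub_distrib]
  refine sum_congr rfl fun a ha => ?_
  rw [DD_split z i j A a ha]
  have : z a ^ (m+1) * conj (z a) = z a ^ m := by
    rw [pow_succ, mul_assoc, hz, mul_one]
  rw [← this]; ring

theorem DD_rec (z : ℤ → ℂ) (hz : ∀ a, z a * conj (z a) = 1) (i j : ℕ) (A : Finset ℤ) :
    DD z (i+1) j A = pp z 1 A * DD z i j A - i * WW z 2 (i-1) j A
      - j * (((A.card : ℂ) - i - (j-1)) * DD z i (j-1) A) := by
  rw [← WW_one, WW_rec z hz 0 i j A, WW_zero]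
  rcases j with _ | j
  · simp
  · simp

theorem theta_aux (κ δ : ℝ) (r : ℂ) (h0 : 0 ≤ κ) (h1 : κ ≤ 1/9) (hδ : 0 ≤ δ) (hr : ‖r‖ ≤ 1/7)
    (hi : |r.im| ≤ δ) : 1 + r ≠ 0 ∧ ‖(κ : ℂ) / (1 + r)‖ ≤ 7/54 ∧ |((κ : ℂ) / (1 + r)).im| ≤ δ/6 := by
  have h67 : 6/7 ≤ ‖1 + r‖ := by
    have := norm_sub_norm_le (1:ℂ) (-r)
    simp at this; linarith
  have hne : 1 + r ≠ 0 := by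
    intro h; rw [h] at h67; norm_num at h67
  refine ⟨hne, ?_, ?_⟩
  · rw [norm_div, Complex.norm_real, Real.norm_of_nonneg h0, div_le_iff₀ (by linarith)]
    nlinarith
  · have hsq : 36/49 ≤ Complex.normSq (1+r) := by
      rw [Complex.normSq_eq_norm_sq]; nlinarith
    have : ((κ : ℂ) / (1 + r)).im = - (κ * r.im / Complex.normSq (1+r)) := by
      rw [Complex.div_im]; simp
    rw [this, abs_neg, abs_div, abs_mul, abs_of_nonneg h0, abs_of_pos (by linarith : 0 < Complex.normSq (1+r)),
      div_le_iff₀ (by linarith)]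
    have : κ * |r.im| ≤ 1/9 * δ := mul_le_mul h1 hi (abs_nonneg _) (by norm_num)
    nlinarith

theorem good_main (z : ℤ → ℂ) (hz : ∀ a, z a * conj (z a) = 1) (A : Finset ℤ) (k : ℕ) (hk : 1 ≤ k)
    (F : ℝ) (hF : ‖pp z 1 A‖ = F) (hF0 : 1000 * (k:ℝ)^2 ≤ F) (hn : 9 * (k:ℝ) * A.card ≤ F^2)
    (hcard : 2 * k ≤ A.card) (hp : ∀ m, 1 ≤ m → m ≤ k + 1 → ‖pp z m A‖ ≤ 4 * F) :
    ∀ s i j, i + j = s → i ≤ k → j ≤ k → DD z i j A ≠ 0 ∧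
      (∃ r : ℂ, DD z (i+1) j A = pp z 1 A * DD z i j A * (1 + r) ∧ ‖r‖ ≤ 1/7 ∧
        |r.im| ≤ 12 * k / F) ∧
      ∀ m, 1 ≤ m → m + i ≤ k + 1 → ‖WW z m i j A‖ ≤ 8 * F * ‖DD z i j A‖ := by
  have hk1 : (1:ℝ) ≤ k := by exact_mod_cast hk
  have hkk : (k:ℝ) ≤ (k:ℝ)^2 := by nlinarith
  have hFpos : 0 < F := by nlinarith
  have hkF : (k:ℝ) / F ≤ 1/1000 := by rw [div_le_iff₀ hFpos]; linarith
  set P := pp z 1 A with hP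
  have hP0 : P ≠ 0 := by intro h; rw [h] at hF; simp at hF; linarith
  have hPP : P * conj P = ((F^2 : ℝ) : ℂ) := by
    rw [Complex.mul_conj, Complex.normSq_eq_norm_sq, hF]
  intro s
  induction s using Nat.strong_induction_on with
  | _ s IH =>
  intro i j hs hi hj
  have Hx : 1 ≤ i → DD z i j A ≠ 0 ∧ ‖DD z (i-1) j A‖ * F ≤ 7/6 * ‖DD z i j A‖ ∧
      ∀ m, 1 ≤ m → m + (i-1) ≤ k + 1 → ‖WW z m (i-1) j A‖ ≤ 8 * F * ‖DD z (i-1) j A‖ := by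
    intro h1
    obtain ⟨a1, ⟨r, a2, a3, a4⟩, a5⟩ := IH (s-1) (by omega) (i-1) j (by omega) (by omega) hj
    obtain ⟨t1, -, -⟩ := theta_aux 0 (12*k/F) r le_rfl (by norm_num) (by positivity) a3 a4
    rw [Nat.sub_add_cancel h1] at a2
    refine ⟨?_, ?_, a5⟩
    · rw [a2]; exact mul_ne_zero (mul_ne_zero hP0 a1) t1
    · rw [a2, norm_mul, norm_mul, hF]
      have h67 : 6/7 ≤ ‖1 + r‖ := by
        have := norm_sub_norm_le (1:ℂ) (-r)
        simp at this; linarith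
      have : 0 ≤ F * ‖DD z (i-1) j A‖ := by positivity
      nlinarith
  have Hy : 1 ≤ j → DD z i j A ≠ 0 ∧ ‖DD z i (j-1) A‖ * F ≤ 7/6 * ‖DD z i j A‖ ∧
      (∃ r : ℂ, DD z i j A = conj P * DD z i (j-1) A * (1 + r) ∧ ‖r‖ ≤ 1/7 ∧
        |r.im| ≤ 12 * k / F) ∧
      ∀ m, 1 ≤ m → m + i ≤ k + 1 → ‖WW z m i (j-1) A‖ ≤ 8 * F * ‖DD z i (j-1) A‖ := by
    intro h1
    obtain ⟨a1, ⟨r, a2, a3, a4⟩, -⟩ := IH (s-1) (by omega) (j-1) i (by omega) (by omega) hi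
    obtain ⟨-, -, a5⟩ := IH (s-1) (by omega) i (j-1) (by omega) hi (by omega)
    rw [Nat.sub_add_cancel h1] at a2
    have b2 := congrArg conj a2
    rw [map_mul, map_mul, DD_conj, DD_conj, map_add, map_one] at b2
    have a3' : ‖conj r‖ ≤ 1/7 := by simpa using a3
    have a4' : |(conj r).im| ≤ 12*k/F := by simpa using a4
    obtain ⟨t1, -, -⟩ := theta_aux 0 (12*k/F) (conj r) le_rfl (by norm_num) (by positivity) a3' a4'
    have hne : DD z i (j-1) A ≠ 0 := by
      rw [← DD_conj]; simpa using a1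
    refine ⟨?_, ?_, ⟨conj r, b2, a3', a4'⟩, a5⟩
    · rw [b2]; exact mul_ne_zero (mul_ne_zero (by simpa using hP0) hne) t1
    · rw [b2, norm_mul, norm_mul, RCLike.norm_conj, hF]
      have h67 : 6/7 ≤ ‖1 + conj r‖ := by
        have := norm_sub_norm_le (1:ℂ) (-conj r)
        simp at this; simp at a3'; linarith
      have : 0 ≤ F * ‖DD z i (j-1) A‖ := by positivity
      nlinarith
  have hne : DD z i j A ≠ 0 := by
    rcases Nat.eq_zero_or_pos i with h | h
    · rcases Nat.eq_zero_or_pos j with h' | h'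
      · subst h; subst h'; simp [DD_00]
      · exact (Hy h').1
    · exact (Hx h).1
  have hik : (i:ℝ) ≤ k := by exact_mod_cast hi
  have hjk : (j:ℝ) ≤ k := by exact_mod_cast hj
  have hd : 0 < ‖DD z i j A‖ := norm_pos_iff.mpr hne
  have Hxm : ∀ m, 1 ≤ m → m + i ≤ k + 2 → ‖(i:ℂ) * WW z m (i-1) j A‖ ≤ 10 * k * ‖DD z i j A‖ := by
    intro m hm hmi
    rcases Nat.eq_zero_or_pos i with h | h
    · subst h; simp; positivity
    · obtain ⟨-, b1, b2⟩ := Hx h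
      have := b2 m hm (by omega)
      rw [norm_mul, Complex.norm_natCast]
      calc (i:ℝ) * ‖WW z m (i-1) j A‖ ≤ k * (8 * F * ‖DD z (i-1) j A‖) := by gcongr
        _ = 8 * k * (‖DD z (i-1) j A‖ * F) := by ring
        _ ≤ 8 * k * (7/6 * ‖DD z i j A‖) := by gcongr
        _ ≤ _ := by nlinarith [mul_nonneg (by linarith : (0:ℝ) ≤ k) hd.le]
  have Hym : ∀ m, 1 ≤ m → m + i ≤ k + 1 → ‖(j:ℂ) * WW z m i (j-1) A‖ ≤ 10 * k * ‖DD z i j A‖ := by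
    intro m hm hmi
    rcases Nat.eq_zero_or_pos j with h | h
    · subst h; simp; positivity
    · obtain ⟨-, b1, -, b2⟩ := Hy h
      have := b2 m hm (by omega)
      rw [norm_mul, Complex.norm_natCast]
      calc (j:ℝ) * ‖WW z m i (j-1) A‖ ≤ k * (8 * F * ‖DD z i (j-1) A‖) := by gcongr
        _ = 8 * k * (‖DD z i (j-1) A‖ * F) := by ring
        _ ≤ 8 * k * (7/6 * ‖DD z i j A‖) := by gcongr
        _ ≤ _ := by nlinarith [mul_nonneg (by linarith : (0:ℝ) ≤ k) hd.le]
  have Hθ : ∃ θ : ℂ, (j:ℂ) * (((A.card : ℂ) - i - (j-1)) * DD z i (j-1) A) = P * DD z i j A * θ ∧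
      ‖θ‖ ≤ 7/54 ∧ |θ.im| ≤ (12 * k / F) / 6 := by
    rcases Nat.eq_zero_or_pos j with h | h
    · refine ⟨0, ?_, by norm_num, ?_⟩
      · subst h; simp
      · simp; positivity
    · obtain ⟨-, -, ⟨r, b1, b2, b3⟩, -⟩ := Hy h
      have hc : (2:ℝ) * k ≤ A.card := by exact_mod_cast hcard
      have hj1 : (1:ℝ) ≤ j := by exact_mod_cast h
      have hi0 : (0:ℝ) ≤ i := by positivity
      obtain ⟨t1, t2, t3⟩ := theta_aux (j * ((A.card : ℝ) - i - (j-1)) / F^2) (12*k/F) r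
        (div_nonneg (mul_nonneg (by linarith) (by linarith)) (by positivity))
        (by
          rw [div_le_iff₀ (by positivity)]
          have : (j:ℝ) * ((A.card : ℝ) - i - (j-1)) ≤ k * A.card :=
            mul_le_mul hjk (by linarith) (by linarith) (by linarith)
          linarith) (by positivity) b2 b3
      refine ⟨_, ?_, t2, t3⟩
      rw [b1]
      have hF2 : (F:ℂ) ≠ 0 := by exact_mod_cast hFpos.ne'
      have e : P * (conj P * DD z i (j-1) A * (1 + r)) *
          (((j * ((A.card : ℝ) - i - (j-1)) / F^2 : ℝ) : ℂ) / (1 + r)) =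
          (P * conj P) * DD z i (j-1) A * ((j * ((A.card : ℝ) - i - (j-1)) / F^2 : ℝ) : ℂ) := by
        field_simp
      rw [e, hPP]
      push_cast
      field_simp
  have hB : (∃ r : ℂ, DD z (i+1) j A = P * DD z i j A * (1 + r) ∧ ‖r‖ ≤ 1/7 ∧
        |r.im| ≤ 12 * k / F) := by
    obtain ⟨θ, h1, h2, h3⟩ := Hθ
    have hPd : P * DD z i j A ≠ 0 := mul_ne_zero hP0 hne
    have hη : ‖(i:ℂ) * WW z 2 (i-1) j A / (P * DD z i j A)‖ ≤ 10 * (k / F) := by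
      rw [norm_div, norm_mul P, hF, div_le_iff₀ (by positivity)]
      refine (Hxm 2 (by norm_num) (by omega)).trans (le_of_eq ?_)
      field_simp
    have hη' := (Complex.abs_im_le_norm _).trans hη
    refine ⟨-θ - (i:ℂ) * WW z 2 (i-1) j A / (P * DD z i j A), ?_, ?_, ?_⟩
    · rw [DD_rec z hz, h1, ← hP]
      field_simp
      ring
    · refine (norm_sub_le _ _).trans ?_
      rw [norm_neg]; linarith
    · rw [Complex.sub_im, Complex.neg_im]
      refine (abs_sub _ _).trans ?_
      rw [abs_neg]
      have e : 12 * (k:ℝ) / F = 12 * (k / F) := by ring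
      rw [e] at h3 ⊢
      have : 0 ≤ (k:ℝ)/F := by positivity
      linarith
  refine ⟨hne, hB, ?_⟩
  intro m hm hmi
  rcases Nat.eq_or_lt_of_le hm with h | h
  · obtain ⟨r, b1, b2, -⟩ := hB
    rw [← h, WW_one, b1, norm_mul, norm_mul, hF]
    have : ‖1 + r‖ ≤ 8 := (norm_add_le _ _).trans (by simp; linarith)
    have h0 : 0 ≤ F * ‖DD z i j A‖ := by positivity
    nlinarith
  · obtain ⟨m, rfl⟩ : ∃ m', m = m' + 1 := ⟨m-1, by omega⟩
    rw [WW_rec z hz]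
    have c1 := Hxm (m+2) (by omega) (by omega)
    have c2 := Hym m (by omega) (by omega)
    have c3 : ‖pp z (m+1) A * DD z i j A‖ ≤ 4 * F * ‖DD z i j A‖ := by
      rw [norm_mul]; gcongr; exact hp _ hm (by omega)
    have c4 := norm_sub_le (pp z (m+1) A * DD z i j A - i * WW z (m+2) (i-1) j A) (j * WW z m i (j-1) A)
    have c5 := norm_sub_le (pp z (m+1) A * DD z i j A) (i * WW z (m+2) (i-1) j A)
    have c6 : 20 * k * ‖DD z i j A‖ ≤ 4 * F * ‖DD z i j A‖ := by gcongr ?_ * _; linarith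
    linarith

theorem phase_step (c r : ℂ) (s ε δ : ℝ) (hs : 0 ≤ s) (hδ : 0 ≤ δ) (he : ε = 3 * δ) (h1 : (s + 1) * ε ≤ 1)
    (hδ1 : δ ≤ 1/10)
    (hc : 0 < c.re) (hci : |c.im| ≤ s * ε * c.re) (hr : ‖r‖ ≤ 1/7) (hi : |r.im| ≤ δ) :
    0 < (c * (1 + r)).re ∧ |(c * (1 + r)).im| ≤ (s + 1) * ε * (c * (1 + r)).re ∧
      6/7 * ‖c‖ ≤ ‖c * (1 + r)‖ := by
  have hre : |r.re| ≤ 1/7 := (Complex.abs_re_le_norm r).trans hr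
  have hre' := abs_le.mp hre
  have hε : 0 ≤ ε := by linarith
  have hse : s * ε ≤ 1 := by nlinarith
  have e1 : (c * (1 + r)).re = c.re * (1 + r.re) - c.im * r.im := by simp
  have e2 : (c * (1 + r)).im = c.re * r.im + c.im * (1 + r.re) := by simp
  have hprod : |c.im * r.im| ≤ (s * ε * c.re) * δ := by
    rw [abs_mul]; exact mul_le_mul hci hi (abs_nonneg _) (by positivity)
  have hp' := abs_le.mp hprod
  have hcd : s * ε * c.re * δ ≤ c.re * δ := by
    have : 0 ≤ c.re * δ := by positivity
    nlinarith
  refine ⟨?_, ?_, ?_⟩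
  · rw [e1]; nlinarith
  · rw [e1, e2]
    have a1 : |c.re * r.im + c.im * (1 + r.re)| ≤ c.re * δ + s * ε * c.re * (1 + r.re) := by
      refine (abs_add_le _ _).trans ?_
      rw [abs_mul, abs_mul, abs_of_pos hc, abs_of_pos (by linarith : 0 < 1 + r.re)]
      gcongr
      linarith
    have a2 : (s+1) * ε * (c.im * r.im) ≤ c.re * δ := by
      have : c.im * r.im ≤ c.re * δ := by linarith
      have h0 : 0 ≤ (s+1) * ε := by positivity
      have h00 : 0 ≤ c.re * δ := by positivity
      nlinarith
    have a3 : ε * c.re * (6/7) ≤ ε * c.re * (1 + r.re) := by gcongr; linarith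
    subst he
    have h00 : 0 ≤ c.re * δ := by positivity
    nlinarith
  · rw [norm_mul]
    have h67 : 6/7 ≤ ‖1 + r‖ := by
        have := norm_sub_norm_le (1:ℂ) (-r)
        simp at this; linarith
    have := norm_nonneg c
    nlinarith

theorem good_bound (z : ℤ → ℂ) (hz : ∀ a, z a * conj (z a) = 1) (A : Finset ℤ) (k : ℕ) (hk : 1 ≤ k)
    (F : ℝ) (hF : ‖pp z 1 A‖ = F) (hF0 : 1000 * (k:ℝ)^2 ≤ F) (hn : 9 * (k:ℝ) * A.card ≤ F^2)
    (hcard : 2 * k ≤ A.card) (hp : ∀ m, 1 ≤ m → m ≤ k + 1 → ‖pp z m A‖ ≤ 4 * F) :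
    1/2 * (36/49)^k * F^(2*k) ≤ (DD z k k A).re := by
  have hk1 : (1:ℝ) ≤ k := by exact_mod_cast hk
  have hkk : (k:ℝ) ≤ (k:ℝ)^2 := by nlinarith
  have hFpos : 0 < F := by nlinarith
  have hkF : (k:ℝ)^2 / F ≤ 1/1000 := by rw [div_le_iff₀ hFpos]; linarith
  have hkF1 : (k:ℝ) / F ≤ 1/1000 := by rw [div_le_iff₀ hFpos]; linarith
  have main := good_main z hz A k hk F hF hF0 hn hcard hp
  set P := pp z 1 A with hP
  set δ := 12 * (k:ℝ) / F with hδ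
  have hδ0 : 0 ≤ δ := by positivity
  have hδ1 : δ ≤ 1/10 := by rw [hδ, mul_div_assoc]; linarith
  have hsε : ∀ s : ℕ, s < 2 * k → ((s:ℝ) + 1) * (3 * δ) ≤ 1 := by
    intro s hs
    have : (s:ℝ) + 1 ≤ 2 * k := by exact_mod_cast hs
    calc ((s:ℝ) + 1) * (3 * δ) ≤ 2 * k * (3 * δ) := by gcongr
      _ = 72 * ((k:ℝ)^2 / F) := by rw [hδ]; ring
      _ ≤ 1 := by linarith
  have S1 : ∀ i ≤ k, ∃ c : ℂ, DD z i 0 A = P^i * c ∧ 0 < c.re ∧ |c.im| ≤ i * (3 * δ) * c.re ∧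
      (6/7)^i ≤ ‖c‖ := by
    intro i
    induction i with
    | zero => intro _; exact ⟨1, by simp [DD_00]⟩
    | succ i ih =>
      intro hi
      obtain ⟨c, c1, c2, c3, c4⟩ := ih (by omega)
      obtain ⟨-, ⟨r, r1, r2, r3⟩, -⟩ := main i i 0 rfl (by omega) (by omega)
      obtain ⟨p1, p2, p3⟩ := phase_step c r i (3*δ) δ (by positivity) hδ0 rfl (hsε i (by omega)) hδ1 c2 c3 r2 r3
      refine ⟨c * (1 + r), by rw [r1, c1]; ring, p1, by push_cast; exact p2, ?_⟩
      rw [pow_succ]; linarith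
  have S2 : ∀ j ≤ k, ∃ c : ℂ, DD z k j A = P^k * (conj P)^j * c ∧ 0 < c.re ∧
      |c.im| ≤ ((k + j : ℕ) : ℝ) * (3 * δ) * c.re ∧ (6/7)^(k+j) ≤ ‖c‖ := by
    intro j
    induction j with
    | zero => intro _; simpa using S1 k le_rfl
    | succ j ih =>
      intro hj
      obtain ⟨c, c1, c2, c3, c4⟩ := ih (by omega)
      obtain ⟨-, ⟨r, r1, r2, r3⟩, -⟩ := main (j+k) j k rfl (by omega) (by omega)
      have b2 := congrArg conj r1
      rw [map_mul, map_mul, DD_conj, DD_conj, map_add, map_one] at b2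
      obtain ⟨p1, p2, p3⟩ := phase_step c (conj r) (k+j:ℕ) (3*δ) δ (by positivity) hδ0 rfl
        (hsε (k+j) (by omega)) hδ1 c2 c3 (by simpa using r2) (by simpa using r3)
      refine ⟨c * (1 + conj r), by rw [b2, c1]; ring, p1, ?_, ?_⟩
      · rw [show k + (j+1) = (k+j)+1 by ring]; push_cast at p2 ⊢; exact p2
      · rw [← add_assoc, pow_succ]; linarith
  obtain ⟨c, c1, c2, c3, c4⟩ := S2 k le_rfl
  have e : P^k * (conj P)^k = ((F^(2*k) : ℝ) : ℂ) := by
    rw [← mul_pow, Complex.mul_conj, Complex.normSq_eq_norm_sq, hF, pow_mul]; push_cast; rfl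
  rw [c1, e, Complex.re_ofReal_mul]
  have h1 : ((k + k : ℕ) : ℝ) * (3 * δ) ≤ 1 := by
    have := hsε (2*k-1) (by omega)
    rw [Nat.cast_sub (by omega)] at this
    push_cast at this ⊢
    linarith
  have h2 : ‖c‖ ≤ 2 * c.re := by
    have := Complex.norm_le_abs_re_add_abs_im c
    rw [abs_of_pos c2] at this
    nlinarith
  have h3 : ((36:ℝ)/49)^k = (6/7)^(k+k) := by
    rw [← two_mul, pow_mul]; norm_num
  rw [h3]
  have : 0 ≤ F^(2*k) := by positivity
  nlinarith

theorem bad_bound (z : ℤ → ℂ) (hz : ∀ a, z a * conj (z a) = 1) (A : Finset ℤ) (k : ℕ) (hk : 1 ≤ k)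
    (Q : ℝ) (hF : 2 * ‖pp z 1 A‖ ≤ Q) (hQ0 : 100 * (k:ℝ) ≤ Q) (hn : 36 * (k:ℝ) * A.card ≤ Q^2)
    (hcard : 2 * k ≤ A.card) (hp : ∀ m, 1 ≤ m → m ≤ k + 1 → ‖pp z m A‖ ≤ 2 * Q) :
    ∀ s i j, i + j = s → i ≤ k → j ≤ k → ‖DD z i j A‖ ≤ Q^s ∧ ‖DD z (i+1) j A‖ ≤ Q^(s+1) ∧
      ∀ m, 1 ≤ m → m + i ≤ k + 1 → ‖WW z m i j A‖ ≤ 4 * Q^(s+1) := by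
  have hk1 : (1:ℝ) ≤ k := by exact_mod_cast hk
  have hQ : 0 < Q := by linarith
  intro s
  induction s using Nat.strong_induction_on with
  | _ s IH =>
  intro i j hs hi hj
  have hik : (i:ℝ) ≤ k := by exact_mod_cast hi
  have hjk : (j:ℝ) ≤ k := by exact_mod_cast hj
  have hne : ‖DD z i j A‖ ≤ Q^s := by
    rcases Nat.eq_zero_or_pos i with h | h
    · rcases Nat.eq_zero_or_pos j with h' | h'
      · subst h; subst h'; subst hs; simp [DD_00]
      · obtain ⟨-, b, -⟩ := IH (s-1) (by omega) (j-1) i (by omega) (by omega) hi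
        rw [Nat.sub_add_cancel h', Nat.sub_add_cancel (by omega), ← DD_conj, RCLike.norm_conj] at b
        exact b
    · obtain ⟨-, b, -⟩ := IH (s-1) (by omega) (i-1) j (by omega) (by omega) hj
      rw [Nat.sub_add_cancel h, Nat.sub_add_cancel (by omega)] at b
      exact b
  have hQs : 0 < Q^s := by positivity
  have hkQ : (k:ℝ) * Q^s ≤ 1/100 * Q^(s+1) := by
    rw [pow_succ]; nlinarith
  have Hxm : ∀ m, 1 ≤ m → m + i ≤ k + 2 → ‖(i:ℂ) * WW z m (i-1) j A‖ ≤ 1/25 * Q^(s+1) := by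
    intro m hm hmi
    rcases Nat.eq_zero_or_pos i with h | h
    · subst h; simp; positivity
    · obtain ⟨-, -, b2⟩ := IH (s-1) (by omega) (i-1) j (by omega) (by omega) hj
      have := b2 m hm (by omega)
      rw [Nat.sub_add_cancel (by omega)] at this
      rw [norm_mul, Complex.norm_natCast]
      calc (i:ℝ) * ‖WW z m (i-1) j A‖ ≤ k * (4 * Q^s) := by gcongr
        _ ≤ _ := by linarith
  have Hym : ∀ m, 1 ≤ m → m + i ≤ k + 1 → ‖(j:ℂ) * WW z m i (j-1) A‖ ≤ 1/25 * Q^(s+1) := by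
    intro m hm hmi
    rcases Nat.eq_zero_or_pos j with h | h
    · subst h; simp; positivity
    · obtain ⟨-, -, b2⟩ := IH (s-1) (by omega) i (j-1) (by omega) hi (by omega)
      have := b2 m hm (by omega)
      rw [Nat.sub_add_cancel (by omega)] at this
      rw [norm_mul, Complex.norm_natCast]
      calc (j:ℝ) * ‖WW z m i (j-1) A‖ ≤ k * (4 * Q^s) := by gcongr
        _ ≤ _ := by linarith
  have Hθ : ‖(j:ℂ) * (((A.card : ℂ) - i - (j-1)) * DD z i (j-1) A)‖ ≤ 1/36 * Q^(s+1) := by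
    rcases Nat.eq_zero_or_pos j with h | h
    · subst h; simp; positivity
    · obtain ⟨b, -, -⟩ := IH (s-1) (by omega) i (j-1) (by omega) hi (by omega)
      have hc : (2:ℝ) * k ≤ A.card := by exact_mod_cast hcard
      have hj1 : (1:ℝ) ≤ j := by exact_mod_cast h
      have hi0 : (0:ℝ) ≤ i := by positivity
      have e : ((A.card : ℂ) - i - (j-1)) = (((A.card : ℝ) - i - (j-1) : ℝ) : ℂ) := by push_cast; rfl
      rw [norm_mul, norm_mul, Complex.norm_natCast, e, Complex.norm_real,
        Real.norm_of_nonneg (by linarith)]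
      calc (j:ℝ) * (((A.card : ℝ) - i - (j-1)) * ‖DD z i (j-1) A‖)
          ≤ k * (A.card * Q^(s-1)) := by
            have h0 : (0:ℝ) ≤ (A.card : ℝ) - i - (j-1) := by linarith
            have h1 : (A.card : ℝ) - i - (j-1) ≤ A.card := by linarith
            have h2 := mul_nonneg h0 (norm_nonneg (DD z i (j-1) A))
            gcongr
        _ = (k * A.card) * Q^(s-1) := by ring
        _ ≤ (1/36 * Q^2) * Q^(s-1) := mul_le_mul_of_nonneg_right (by linarith) (by positivity)
        _ = 1/36 * Q^(s+1) := by
          rw [mul_assoc, ← pow_add]; congr 2; omega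
  have hB : ‖DD z (i+1) j A‖ ≤ Q^(s+1) := by
    rw [DD_rec z hz]
    have c1 := Hxm 2 (by omega) (by omega)
    have c3 : ‖pp z 1 A * DD z i j A‖ ≤ 1/2 * Q^(s+1) := by
      rw [norm_mul]
      calc _ ≤ (Q/2) * Q^s := by gcongr; linarith
        _ = _ := by ring
    have c4 := norm_sub_le (pp z 1 A * DD z i j A - i * WW z 2 (i-1) j A)
      ((j:ℂ) * (((A.card : ℂ) - i - (j-1)) * DD z i (j-1) A))
    have c5 := norm_sub_le (pp z 1 A * DD z i j A) (i * WW z 2 (i-1) j A)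
    have : 0 < Q^(s+1) := by positivity
    linarith
  refine ⟨hne, hB, ?_⟩
  intro m hm hmi
  rcases Nat.eq_or_lt_of_le hm with h | h
  · rw [← h, WW_one]
    have : 0 < Q^(s+1) := by positivity
    linarith
  · obtain ⟨m, rfl⟩ : ∃ m', m = m' + 1 := ⟨m-1, by omega⟩
    rw [WW_rec z hz]
    have c1 := Hxm (m+2) (by omega) (by omega)
    have c2 := Hym m (by omega) (by omega)
    have c3 : ‖pp z (m+1) A * DD z i j A‖ ≤ 2 * Q^(s+1) := by
      rw [norm_mul]
      calc _ ≤ (2*Q) * Q^s := by gcongr; exact hp _ hm (by omega)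
        _ = _ := by ring
    have c4 := norm_sub_le (pp z (m+1) A * DD z i j A - i * WW z (m+2) (i-1) j A) (j * WW z m i (j-1) A)
    have c5 := norm_sub_le (pp z (m+1) A * DD z i j A) (i * WW z (m+2) (i-1) j A)
    have : 0 < Q^(s+1) := by positivity
    linarith

section Fourier

variable {N : ℕ} [NeZero N]

noncomputable def zt (t : ZMod N) (a : ℤ) : ℂ := ZMod.stdAddChar ((a : ZMod N) * t)

theorem chi_conj (x : ZMod N) : conj (ZMod.stdAddChar x : ℂ) = ZMod.stdAddChar (-x) :=
  (AddChar.map_neg_eq_conj _ _).symm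

theorem zt_conj (t : ZMod N) (a : ℤ) : zt t a * conj (zt t a) = 1 := by
  rw [zt, chi_conj, ← AddChar.map_add_eq_mul]; simp

theorem orth (s : ZMod N) : ∑ t : ZMod N, (ZMod.stdAddChar (s * t) : ℂ) = if s = 0 then (N : ℂ) else 0 := by
  have := AddChar.sum_mulShift (R' := ℂ) s (ZMod.isPrimitive_stdAddChar N)
  simp only [ZMod.card] at this
  simp_rw [mul_comm s]
  rw [this]; split_ifs <;> simp

theorem orth_count {ι : Type*} (S : Finset ι) (g : ι → ZMod N) [DecidablePred fun p => g p = 0] :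
    ∑ t : ZMod N, ∑ p ∈ S, (ZMod.stdAddChar (g p * t) : ℂ) =
      N * ((S.filter (fun p => g p = 0)).card : ℂ) := by
  rw [sum_comm]
  simp_rw [orth]
  rw [card_filter]; push_cast
  rw [mul_sum]
  refine sum_congr rfl fun p _ => ?_
  split_ifs <;> simp

theorem DD_int (i j : ℕ) (A : Finset ℤ) (c : ZMod N)
    (h : ∀ I J : Finset ℤ, I ⊆ A → J ⊆ A → Disjoint I J → I.card = i → J.card = j →
      c + ∑ a ∈ I, (a : ZMod N) - ∑ a ∈ J, (a : ZMod N) ≠ 0) :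
    ∑ t : ZMod N, (ZMod.stdAddChar (c * t) : ℂ) * DD (zt t) i j A = 0 := by
  induction i generalizing A c j with
  | zero =>
    induction j generalizing A c with
    | zero =>
      have := h ∅ ∅ (by simp) (by simp) (by simp) rfl rfl
      simp only [DD_00, mul_one, orth]
      simp at this; simp [this]
    | succ j ih =>
      simp only [DD_y, mul_sum]
      rw [sum_comm]
      refine sum_eq_zero fun a ha => ?_
      rw [← ih (A.erase a) (c - a) ?_]
      · refine sum_congr rfl fun t _ => ?_
        rw [zt, chi_conj, ← mul_assoc, ← AddChar.map_add_eq_mul]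
        congr 2; ring
      · intro I J hI hJ hd hi hj
        have haJ : a ∉ J := fun h' => by simpa using hJ h'
        have haI : a ∉ I := fun h' => by simpa using hI h'
        have := h I (insert a J) (hI.trans (erase_subset _ _))
          (insert_subset ha (hJ.trans (erase_subset _ _))) (by simp [haI, hd]) hi (by simp [haJ, hj])
        rw [sum_insert haJ] at this
        convert this using 1; ring
  | succ i ih =>
    simp only [DD_x, mul_sum]
    rw [sum_comm]
    refine sum_eq_zero fun a ha => ?_
    rw [← ih j (A.erase a) (c + a) ?_]
    · refine sum_congr rfl fun t _ => ?_
      rw [zt, ← mul_assoc, ← AddChar.map_add_eq_mul]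
      congr 2; ring
    · intro I J hI hJ hd hi hj
      have haJ : a ∉ J := fun h' => by simpa using hJ h'
      have haI : a ∉ I := fun h' => by simpa using hI h'
      have := h (insert a I) J (insert_subset ha (hI.trans (erase_subset _ _)))
        (hJ.trans (erase_subset _ _)) (by simp [haJ, hd]) (by simp [haI, hi]) hj
      rw [sum_insert haI] at this
      convert this using 1; ring

theorem chi_sum {ι : Type*} (S : Finset ι) (g : ι → ZMod N) :
    (ZMod.stdAddChar (∑ i ∈ S, g i) : ℂ) = ∏ i ∈ S, ZMod.stdAddChar (g i) := by
  classical
  induction S using Finset.induction_on with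
  | empty => simp
  | insert a s ha ih => rw [sum_insert ha, prod_insert ha, AddChar.map_add_eq_mul, ih]

theorem pp_pow (k : ℕ) (A : Finset ℤ) (t : ZMod N) : pp (zt t) 1 A ^ k =
    ∑ x ∈ Fintype.piFinset fun _ : Fin k => A, (ZMod.stdAddChar (((∑ i, x i : ℤ) : ZMod N) * t) : ℂ) := by
  simp only [pp, pow_one]
  rw [Finset.sum_pow']
  refine sum_congr rfl fun x _ => ?_
  push_cast
  rw [sum_mul, chi_sum]; rfl

theorem pp_pow_conj (k : ℕ) (A : Finset ℤ) (t : ZMod N) : conj (pp (zt t) 1 A) ^ k =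
    ∑ x ∈ Fintype.piFinset fun _ : Fin k => A, (ZMod.stdAddChar (-((∑ i, x i : ℤ) : ZMod N) * t) : ℂ) := by
  rw [← map_pow, pp_pow, map_sum]
  refine sum_congr rfl fun x _ => ?_
  rw [chi_conj]; congr 1; ring

theorem pp_one_norm_pow (k : ℕ) (A : Finset ℤ) (t : ZMod N) :
    ((‖pp (zt t) 1 A‖ ^ (2*k) : ℝ) : ℂ) = pp (zt t) 1 A ^ k * conj (pp (zt t) 1 A) ^ k := by
  rw [← mul_pow, Complex.mul_conj, Complex.normSq_eq_norm_sq, pow_mul]; push_cast; rfl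

theorem pi_abs (k : ℕ) (A : Finset ℤ) (B : ℤ) (hB : ∀ a ∈ A, |a| ≤ B) (x : Fin k → ℤ)
    (hx : x ∈ Fintype.piFinset fun _ : Fin k => A) : |∑ i, x i| ≤ k * B := by
  refine (abs_sum_le_sum_abs _ _).trans ?_
  refine (sum_le_sum fun i _ => hB _ (Fintype.mem_piFinset.mp hx i)).trans ?_
  simp

theorem Mcount_eq (k : ℕ) (A : Finset ℤ) (B : ℤ) (hB : ∀ a ∈ A, |a| ≤ B) (hN : 2 * k * B < N) :
    ∑ t : ZMod N, ‖pp (zt t) 1 A‖ ^ (2*k) = (N:ℝ) * Mcount k A := by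
  classical
  have key : ∑ t : ZMod N, ((‖pp (zt t) 1 A‖ ^ (2*k) : ℝ) : ℂ) = (N:ℂ) * Mcount k A := by
    have e : ∀ t : ZMod N, ((‖pp (zt t) 1 A‖ ^ (2*k) : ℝ) : ℂ) =
        ∑ p ∈ ((Fintype.piFinset fun _ : Fin k => A) ×ˢ (Fintype.piFinset fun _ : Fin k => A)),
        (ZMod.stdAddChar ((((∑ i, p.1 i : ℤ) : ZMod N) - ((∑ i, p.2 i : ℤ) : ZMod N)) * t) : ℂ) := by
      intro t
      rw [pp_one_norm_pow, pp_pow, pp_pow_conj, sum_mul_sum, ← sum_product']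
      refine sum_congr rfl fun p _ => ?_
      rw [← AddChar.map_add_eq_mul]; congr 1; ring
    rw [sum_congr rfl fun t _ => e t, orth_count, Mcount]
    congr 3
    apply filter_congr
    intro p hp
    rw [mem_product] at hp
    have h1 := abs_le.mp (pi_abs k A B hB _ hp.1)
    have h2 := abs_le.mp (pi_abs k A B hB _ hp.2)
    rw [← Int.cast_sub, ZMod.intCast_zmod_eq_zero_iff_dvd]
    constructor
    · intro h
      have := Int.eq_zero_of_abs_lt_dvd h (abs_lt.mpr ⟨by linarith, by linarith⟩)
      linarith
    · intro h; rw [h]; simp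
  exact_mod_cast key

theorem pp_mul (m : ℕ) (A : Finset ℤ) (t : ZMod N) : pp (zt t) m A = pp (zt ((m : ZMod N) * t)) 1 A := by
  simp only [pp, zt, pow_one]
  refine sum_congr rfl fun a _ => ?_
  rw [← AddChar.map_nsmul_eq_pow]
  congr 1; rw [nsmul_eq_mul]; ring

theorem pp_norm_sum (hN : N.Prime) (m : ℕ) (hm : 1 ≤ m) (hmN : m < N) (A : Finset ℤ) (k : ℕ) :
    ∑ t : ZMod N, ‖pp (zt t) m A‖ ^ k = ∑ t : ZMod N, ‖pp (zt t) 1 A‖ ^ k := by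
  haveI := Fact.mk hN
  simp_rw [pp_mul m]
  have hm0 : (m : ZMod N) ≠ 0 := by
    intro h
    rw [ZMod.natCast_eq_zero_iff] at h
    exact absurd (Nat.le_of_dvd hm h) (by omega)
  exact Equiv.sum_comp (Equiv.mulLeft₀ (m : ZMod N) hm0) (fun t => ‖pp (zt t) 1 A‖ ^ k)

theorem DD_sum_zero (k : ℕ) (A : Finset ℤ) (B : ℤ) (hB : ∀ a ∈ A, |a| ≤ B) (hN : 2 * k * B < N)
    (hw : IsWeakBkSet k A) : ∑ t : ZMod N, DD (zt t) k k A = 0 := by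
  have := DD_int (N := N) k k A 0 ?_
  · simpa using this
  · intro I J hI hJ hd hi hj h0
    have hb : ∀ I : Finset ℤ, I ⊆ A → I.card = k → |∑ a ∈ I, a| ≤ k * B := by
      intro I hI hi
      refine (abs_sum_le_sum_abs _ _).trans ?_
      refine (sum_le_sum fun i h => hB _ (hI h)).trans ?_
      simp [hi]
    have h1 := abs_le.mp (hb I hI hi)
    have h2 := abs_le.mp (hb J hJ hj)
    rw [zero_add, ← Int.cast_sum, ← Int.cast_sum, ← Int.cast_sub, ZMod.intCast_zmod_eq_zero_iff_dvd] at h0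
    have := Int.eq_zero_of_abs_lt_dvd h0 (abs_lt.mpr ⟨by linarith, by linarith⟩)
    have hs : ∀ (I : Finset ℤ) (hi : I.card = k), ∑ l, I.orderEmbOfFin hi l = ∑ a ∈ I, a := by
      intro I hi
      have e : I = univ.map (I.orderEmbOfFin hi).toEmbedding := by
        rw [← Finset.coe_inj]; simp
      conv_rhs => rw [e, sum_map]
      rfl
    obtain ⟨a, b, hab⟩ := hw (I.orderEmbOfFin hi) (J.orderEmbOfFin hj)
      (fun l => hI (orderEmbOfFin_mem _ _ _)) (fun l => hJ (orderEmbOfFin_mem _ _ _))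
      (by rw [hs, hs]; linarith) (I.orderEmbOfFin hi).injective (J.orderEmbOfFin hj).injective
    exact Finset.disjoint_left.mp hd (orderEmbOfFin_mem I hi a) (hab ▸ orderEmbOfFin_mem J hj b)

open scoped Classical in
noncomputable def SolSet (k : ℕ) (A : Finset ℤ) : Finset ((Fin k → ℤ) × (Fin k → ℤ)) :=
  ((Fintype.piFinset fun _ : Fin k => A) ×ˢ (Fintype.piFinset fun _ : Fin k => A)).filter
    (fun p => (∑ i, p.1 i) = ∑ i, p.2 i)

theorem mem_SolSet (k : ℕ) (A : Finset ℤ) (p) : p ∈ SolSet k A ↔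
    (∀ i, p.1 i ∈ A) ∧ (∀ i, p.2 i ∈ A) ∧ ∑ i, p.1 i = ∑ i, p.2 i := by
  simp [SolSet, and_assoc]

theorem cnt1 (k : ℕ) (A : Finset ℤ) (i j : Fin (k+1)) :
    ((SolSet (k+1) A).filter (fun p => p.1 i = p.2 j)).card ≤ A.card * Mcount k A := by
  have : Mcount k A = (SolSet k A).card := rfl
  rw [this, ← card_product]
  apply card_le_card_of_injOn
    (fun p => (p.1 i, (fun l => p.1 (i.succAbove l), fun l => p.2 (j.succAbove l))))
  · intro p hp
    simp only [coe_filter, Set.mem_setOf_eq, mem_SolSet] at hp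
    obtain ⟨⟨h1, h2, h3⟩, h4⟩ := hp
    simp only [coe_product, Set.mem_prod, mem_coe, mem_SolSet]
    refine ⟨h1 _, fun _ => h1 _, fun _ => h2 _, ?_⟩
    rw [Fin.sum_univ_succAbove _ i, Fin.sum_univ_succAbove p.2 j, h4] at h3
    linarith
  · intro p hp q hq h
    simp only [coe_filter, Set.mem_setOf_eq] at hp hq
    simp only [Prod.mk.injEq] at h
    obtain ⟨h1, h2, h3⟩ := h
    refine Prod.ext (funext fun l => ?_) (funext fun l => ?_)
    · rcases Fin.eq_self_or_eq_succAbove i l with rfl | ⟨m, rfl⟩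
      · exact h1
      · exact congrFun h2 m
    · rcases Fin.eq_self_or_eq_succAbove j l with rfl | ⟨m, rfl⟩
      · rw [← hp.2, ← hq.2]; exact h1
      · exact congrFun h3 m

theorem cnt2_swap (k : ℕ) (A : Finset ℤ) (i j : Fin k) :
    ((SolSet k A).filter (fun p => p.2 i = p.2 j)).card ≤
      ((SolSet k A).filter (fun p => p.1 i = p.1 j)).card := by
  apply card_le_card_of_injOn Prod.swap
  · intro p hp
    simp only [coe_filter, Set.mem_setOf_eq, mem_SolSet] at hp ⊢
    exact ⟨⟨hp.1.2.1, hp.1.1, hp.1.2.2.symm⟩, hp.2⟩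
  · exact Prod.swap_injective.injOn

theorem cnt2 (k : ℕ) (A : Finset ℤ) (i j : Fin (k+2)) (hij : i ≠ j) :
    (N:ℝ) * ((SolSet (k+2) A).filter (fun p => p.1 i = p.1 j)).card ≤
      ∑ t : ZMod N, ‖pp (zt t) 2 A‖ * ‖pp (zt t) 1 A‖ ^ (2*k+2) := by
  classical
  set S := A ×ˢ ((Fintype.piFinset fun _ : Fin k => A) ×ˢ (Fintype.piFinset fun _ : Fin (k+2) => A)) with hS
  set g : ℤ × ((Fin k → ℤ) × (Fin (k+2) → ℤ)) → ZMod N := fun p =>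
    2 * (p.1 : ZMod N) + ((∑ i, p.2.1 i : ℤ) : ZMod N) - ((∑ i, p.2.2 i : ℤ) : ZMod N) with hg
  obtain ⟨j', rfl⟩ : ∃ j', j = i.succAbove j' := by
    rcases Fin.eq_self_or_eq_succAbove i j with h | h
    · exact absurd h.symm hij
    · exact h
  have h1 : ((SolSet (k+2) A).filter (fun p => p.1 i = p.1 (i.succAbove j'))).card ≤
      (S.filter (fun p => g p = 0)).card := by
    apply card_le_card_of_injOn
      (fun p => (p.1 i, (fun l => p.1 (i.succAbove (j'.succAbove l)), p.2)))
    · intro p hp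
      simp only [coe_filter, Set.mem_setOf_eq, mem_SolSet] at hp
      obtain ⟨⟨h1, h2, h3⟩, h4⟩ := hp
      simp only [coe_filter, Set.mem_setOf_eq, hS, mem_product, Fintype.mem_piFinset]
      refine ⟨⟨h1 _, fun _ => h1 _, fun _ => h2 _⟩, ?_⟩
      rw [Fin.sum_univ_succAbove _ i, Fin.sum_univ_succAbove _ j', ← h4] at h3
      simp only [hg]
      rw [← h3]; push_cast; ring
    · intro p hp q hq h
      simp only [coe_filter, Set.mem_setOf_eq] at hp hq
      simp only [Prod.mk.injEq] at h
      obtain ⟨h1, h2, h3⟩ := h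
      refine Prod.ext (funext fun l => ?_) h3
      rcases Fin.eq_self_or_eq_succAbove i l with rfl | ⟨m, rfl⟩
      · exact h1
      · rcases Fin.eq_self_or_eq_succAbove j' m with rfl | ⟨m', rfl⟩
        · rw [← hp.2, ← hq.2]; exact h1
        · exact congrFun h2 m'
  have h2 : ∀ t : ZMod N, ∑ p ∈ S, (ZMod.stdAddChar (g p * t) : ℂ) =
      pp (zt t) 2 A * (pp (zt t) 1 A ^ k * conj (pp (zt t) 1 A) ^ (k+2)) := by
    intro t
    rw [pp_pow, pp_pow_conj, sum_mul_sum, ← sum_product', pp, sum_mul_sum, ← sum_product']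
    refine sum_congr rfl fun p _ => ?_
    rw [zt, ← AddChar.map_nsmul_eq_pow, ← AddChar.map_add_eq_mul, ← AddChar.map_add_eq_mul]
    congr 1
    simp only [hg, nsmul_eq_mul]; push_cast; ring
  have h3 := orth_count S g
  have h4 : (N:ℝ) * (S.filter (fun p => g p = 0)).card = ‖(N:ℂ) * ((S.filter (fun p => g p = 0)).card : ℂ)‖ := by
    rw [norm_mul, Complex.norm_natCast, Complex.norm_natCast]
  calc _ ≤ (N:ℝ) * (S.filter (fun p => g p = 0)).card := by gcongr
    _ = ‖∑ t : ZMod N, ∑ p ∈ S, (ZMod.stdAddChar (g p * t) : ℂ)‖ := by rw [h4, h3]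
    _ ≤ ∑ t : ZMod N, ‖∑ p ∈ S, (ZMod.stdAddChar (g p * t) : ℂ)‖ := norm_sum_le _ _
    _ = _ := by
      refine sum_congr rfl fun t _ => ?_
      rw [h2, norm_mul, norm_mul, norm_pow, norm_pow, RCLike.norm_conj, ← pow_add]
      congr 2; ring

end Fourier

theorem pointwise_bound (z : ℤ → ℂ) (hz : ∀ a, z a * conj (z a) = 1) (A : Finset ℤ) (k : ℕ)
    (hk : 65 ≤ k) (hA : 20 * k ^ 6 ≤ A.card) :
    1/2*(36/49)^k * ‖pp z 1 A‖^(2*k) - 2*((1/4)^k * ∑ m ∈ Icc 1 (k+1), ‖pp z m A‖^(2*k)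
      + (36*(k:ℝ)*A.card)^k) ≤ (DD z k k A).re := by
  have hkR : (65:ℝ) ≤ k := by exact_mod_cast hk
  have hAR : 20 * (k:ℝ)^6 ≤ A.card := by exact_mod_cast hA
  have hkn : 20 * (k:ℝ)^7 ≤ k * A.card := by
    calc 20 * (k:ℝ)^7 = k * (20 * (k:ℝ)^6) := by ring
      _ ≤ _ := by gcongr
  have hcard : 2 * k ≤ A.card := by
    refine le_trans ?_ hA
    calc 2 * k ≤ 20 * k := by omega
      _ ≤ 20 * k^6 := by
        gcongr; exact Nat.le_self_pow (by norm_num) k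
  have hk3 : (65:ℝ)^3 ≤ (k:ℝ)^3 := by gcongr
  have hk7 : 1000000 * (k:ℝ)^4 ≤ 180 * (k:ℝ)^7 := by
    have : 180 * (k:ℝ)^7 = 180 * (k:ℝ)^3 * (k:ℝ)^4 := by ring
    rw [this]; gcongr; linarith
  set T := Real.sqrt (9*k*A.card) with hT
  have hT2 : T^2 = 9*k*A.card := Real.sq_sqrt (by positivity)
  have hT0 : 0 ≤ T := Real.sqrt_nonneg _
  have hTb : 1000*(k:ℝ)^2 ≤ T := by
    apply Real.le_sqrt_of_sq_le
    have : (1000*(k:ℝ)^2)^2 = 1000000 * (k:ℝ)^4 := by ring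
    rw [this]; linarith
  have hS0 : 0 ≤ ∑ m ∈ Icc 1 (k+1), ‖pp z m A‖^(2*k) := sum_nonneg fun _ _ => by positivity
  by_cases hg : T ≤ ‖pp z 1 A‖ ∧ ∀ m, 1 ≤ m → m ≤ k+1 → ‖pp z m A‖ ≤ 4*‖pp z 1 A‖
  · have := good_bound z hz A k (by omega) _ rfl (hTb.trans hg.1)
      (by rw [← hT2]; gcongr; exact hg.1) hcard hg.2
    have h0 : 0 ≤ 2*((1/4)^k * ∑ m ∈ Icc 1 (k+1), ‖pp z m A‖^(2*k) + (36*(k:ℝ)*A.card)^k) := by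
      positivity
    linarith
  · obtain ⟨m0, hm0, hmax⟩ := exists_max_image (Icc 1 (k+1)) (fun m => ‖pp z m A‖)
      ⟨1, by simp⟩
    set G := ‖pp z m0 A‖ with hG
    have hG0 : 0 ≤ G := norm_nonneg _
    set Q := max (G/2) (2*T) with hQ
    have hQT : 2*T ≤ Q := le_max_right _ _
    have hQG : G/2 ≤ Q := le_max_left _ _
    have hQ0 : 0 ≤ Q := by linarith
    have hF : 2*‖pp z 1 A‖ ≤ Q := by
      by_cases h1 : T ≤ ‖pp z 1 A‖
      · have : ∃ m, 1 ≤ m ∧ m ≤ k+1 ∧ 4*‖pp z 1 A‖ < ‖pp z m A‖ := by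
          by_contra! h
          exact hg ⟨h1, h⟩
        obtain ⟨m, a, b, c⟩ := this
        have := hmax m (mem_Icc.mpr ⟨a, b⟩)
        linarith
      · linarith
    have hk2 : (k:ℝ) ≤ (k:ℝ)^2 := by nlinarith
    have hb := (bad_bound z hz A k (by omega) Q hF (by linarith)
      (by calc 36*(k:ℝ)*A.card = (2*T)^2 := by rw [mul_pow, hT2]; ring
            _ ≤ Q^2 := by gcongr) hcard
      (fun m a b => by
        have := hmax m (mem_Icc.mpr ⟨a, b⟩)
        linarith) (2*k) k k (by ring) le_rfl le_rfl).1
    have hre : -Q^(2*k) ≤ (DD z k k A).re := by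
      have := abs_le.mp ((Complex.abs_re_le_norm (DD z k k A)).trans hb)
      exact this.1
    have hFQ : ‖pp z 1 A‖^(2*k) ≤ Q^(2*k) := by
      gcongr; linarith [norm_nonneg (pp z 1 A)]
    have hc : 1/2*(36/49:ℝ)^k ≤ 1 := by
      have : (36/49:ℝ)^k ≤ 1 := pow_le_one₀ (by norm_num) (by norm_num)
      linarith
    have hcF : 1/2*(36/49:ℝ)^k * ‖pp z 1 A‖^(2*k) ≤ Q^(2*k) := by
      calc _ ≤ 1 * Q^(2*k) := by gcongr
        _ = _ := one_mul _
    have hQb : Q^(2*k) ≤ (1/4)^k * ∑ m ∈ Icc 1 (k+1), ‖pp z m A‖^(2*k) + (36*(k:ℝ)*A.card)^k := by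
      have e1 : (G/2)^(2*k) ≤ (1/4)^k * ∑ m ∈ Icc 1 (k+1), ‖pp z m A‖^(2*k) := by
        have : (G/2)^(2*k) = (1/4)^k * G^(2*k) := by
          rw [pow_mul, pow_mul, ← mul_pow]; congr 1; ring
        rw [this]
        gcongr
        exact single_le_sum (f := fun m => ‖pp z m A‖^(2*k)) (fun _ _ => by positivity) hm0
      have e2 : (2*T)^(2*k) = (36*(k:ℝ)*A.card)^k := by
        rw [pow_mul, mul_pow, hT2]; congr 1; ring
      have p1 : 0 ≤ (1/4:ℝ)^k * ∑ m ∈ Icc 1 (k+1), ‖pp z m A‖^(2*k) := by positivity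
      have p2 : 0 ≤ (36*(k:ℝ)*A.card)^k := by positivity
      rcases max_choice (G/2) (2*T) with h | h
      · rw [hQ, h]; linarith
      · rw [hQ, h, e2]; linarith
    linarith

theorem big_case {N : ℕ} [NeZero N] (hNp : N.Prime) (k : ℕ) (hk : 65 ≤ k) (A : Finset ℤ)
    (hA : 20 * k ^ 6 ≤ A.card) (B : ℤ) (hB : ∀ a ∈ A, |a| ≤ B) (hN : 2 * k * B < N)
    (hNk : k + 1 < N) (hw : IsWeakBkSet k A) :
    (Mcount k A : ℝ) ≤ 8 * (49 * (k:ℝ) * A.card)^k := by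
  have hM := Mcount_eq (N := N) k A B hB hN
  have h0 := DD_sum_zero (N := N) k A B hB hN hw
  have h1 : ∑ t : ZMod N, (DD (zt t) k k A).re = 0 := by
    rw [← Complex.re_sum, h0]; rfl
  have h2 := sum_le_sum fun (t : ZMod N) (_ : t ∈ univ) => pointwise_bound (zt t) (zt_conj t) A k hk hA
  rw [h1, sum_sub_distrib, ← mul_sum, ← mul_sum, sum_add_distrib, ← mul_sum, sum_comm, hM] at h2
  have h3 : ∑ m ∈ Icc 1 (k+1), ∑ t : ZMod N, ‖pp (zt t) m A‖^(2*k) = (k+1) * (N * Mcount k A) := by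
    rw [← hM]
    rw [sum_congr rfl fun m hm => pp_norm_sum hNp m (mem_Icc.mp hm).1 (by have := (mem_Icc.mp hm).2; omega) A (2*k)]
    simp
  rw [h3] at h2
  simp only [sum_const, card_univ, ZMod.card, nsmul_eq_mul] at h2
  have hNpos : (0:ℝ) < N := by exact_mod_cast hNp.pos
  set M : ℝ := (Mcount k A : ℝ) with hMd
  have hM0 : 0 ≤ M := by positivity
  have h4 : 1/2*(36/49)^k * M ≤ 2*((1/4)^k*(k+1)*M + (36*(k:ℝ)*A.card)^k) := by
    have : N * (1/2*(36/49)^k * M) ≤ N * (2*((1/4)^k*(k+1)*M + (36*(k:ℝ)*A.card)^k)) := by linarith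
    exact le_of_mul_le_mul_left this hNpos
  have h5 : ∀ k : ℕ, 65 ≤ k → 8*((k:ℝ)+1) ≤ (144/49)^k := by
    intro k hk
    induction k, hk using Nat.le_induction with
    | base => norm_num
    | succ k hk ih =>
      rw [pow_succ]; push_cast
      have : (65:ℝ) ≤ k := by exact_mod_cast hk
      nlinarith
  have h6 : 2*((1/4:ℝ)^k*(k+1)) ≤ 1/4*(36/49)^k := by
    have e : (36/49:ℝ)^k = (144/49)^k * (1/4)^k := by rw [← mul_pow]; norm_num
    rw [e]
    have : (0:ℝ) < (1/4)^k := by positivity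
    nlinarith [h5 k hk]
  have h7 : (36/49:ℝ)^k * M ≤ 8 * (36*(k:ℝ)*A.card)^k := by
    nlinarith [mul_le_mul_of_nonneg_right h6 hM0]
  have e : (36*(k:ℝ)*A.card)^k = (36/49:ℝ)^k * (49*(k:ℝ)*A.card)^k := by
    rw [← mul_pow]; congr 1; ring
  rw [e] at h7
  have : (0:ℝ) < (36/49)^k := by positivity
  refine le_of_mul_le_mul_left ?_ this
  linarith

theorem young (a b : ℝ) (ha : 0 ≤ a) (hb : 0 ≤ b) (m : ℕ) :
    ((m:ℝ)+1) * a * b^m ≤ a^(m+1) + m * b^(m+1) := by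
  induction m with
  | zero => simp
  | succ m ih =>
    have h : 0 ≤ (a^(m+1) - b^(m+1)) * (a - b) := by
      rcases le_total a b with h | h
      · have : a^(m+1) ≤ b^(m+1) := by gcongr
        nlinarith
      · have : b^(m+1) ≤ a^(m+1) := by gcongr
        exact mul_nonneg (by linarith) (by linarith)
    have h2 := mul_le_mul_of_nonneg_right ih hb
    push_cast
    have e1 : a^(m+1+1) = a^(m+1)*a := pow_succ _ _
    have e2 : b^(m+1+1) = b^(m+1)*b := pow_succ _ _
    have e3 : b^(m+1) = b^m*b := pow_succ _ _
    rw [e1, e2]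
    have h3 : ((m:ℝ)+1) * a * b^m * b = ((m:ℝ)+1) * a * b^(m+1) := by rw [e3]; ring
    rw [h3] at h2
    clear ih e1 e2 e3 h3
    generalize a^(m+1) = X at *
    generalize b^(m+1) = Y at *
    linarith

theorem three_max (a b c : ℝ) (ha : 0 ≤ a) (hb : 0 ≤ b) (hc : 0 ≤ c) (m : ℕ) :
    c * (a * b^(2*m+2)) ≤ a^(2*(m+2)) + b^(2*(m+2)) + c^(2*(m+2)) := by
  have key : ∀ g : ℝ, a ≤ g → b ≤ g → c ≤ g → c * (a * b^(2*m+2)) ≤ g^(2*(m+2)) := by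
    intro g h1 h2 h3
    calc c * (a * b^(2*m+2)) ≤ g * (g * g^(2*m+2)) := by
          have : 0 ≤ g := ha.trans h1
          gcongr
      _ = _ := by ring
  have pa : 0 ≤ a^(2*(m+2)) := by positivity
  have pb : 0 ≤ b^(2*(m+2)) := by positivity
  have pc : 0 ≤ c^(2*(m+2)) := by positivity
  rcases le_total a b with h | h
  · rcases le_total b c with h' | h'
    · linarith [key c (h.trans h') h' le_rfl]
    · linarith [key b h le_rfl h']
  · rcases le_total a c with h' | h'
    · linarith [key c h' (h.trans h') le_rfl]
    · linarith [key a le_rfl h h']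

theorem cover (k : ℕ) (A : Finset ℤ) (hw : IsWeakBkSet k A) :
    Mcount k A ≤ ∑ q : Fin k × Fin k, ((SolSet k A).filter (fun p => p.1 q.1 = p.2 q.2)).card
      + ∑ q ∈ (univ : Finset (Fin k × Fin k)).filter (fun q => q.1 ≠ q.2),
        ((SolSet k A).filter (fun p => p.1 q.1 = p.1 q.2)).card := by
  classical
  have h1 : SolSet k A ⊆ ((univ : Finset (Fin k × Fin k)).biUnion
        fun q => (SolSet k A).filter (fun p => p.1 q.1 = p.2 q.2)) ∪
      (((univ : Finset (Fin k × Fin k)).filter (fun q => q.1 ≠ q.2)).biUnion fun q =>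
        if q.1 < q.2 then (SolSet k A).filter (fun p => p.1 q.1 = p.1 q.2)
        else (SolSet k A).filter (fun p => p.2 q.1 = p.2 q.2)) := by
    intro p hp
    rw [mem_union, mem_biUnion, mem_biUnion]
    by_cases hx : Function.Injective p.1
    · by_cases hy : Function.Injective p.2
      · obtain ⟨h1, h2, h3⟩ := (mem_SolSet k A p).mp hp
        obtain ⟨i, j, hij⟩ := hw p.1 p.2 h1 h2 h3 hx hy
        exact Or.inl ⟨(i, j), mem_univ _, mem_filter.mpr ⟨hp, hij⟩⟩
      · right
        simp only [Function.Injective, not_forall] at hy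
        obtain ⟨i, j, hij, hne⟩ := hy
        rcases lt_or_gt_of_ne hne with h | h
        · refine ⟨(j, i), by simpa using fun h => hne h.symm, ?_⟩
          rw [if_neg (by simpa using h.le)]
          exact mem_filter.mpr ⟨hp, hij.symm⟩
        · refine ⟨(i, j), by simpa using hne, ?_⟩
          rw [if_neg (by simpa using h.le)]
          exact mem_filter.mpr ⟨hp, hij⟩
    · right
      simp only [Function.Injective, not_forall] at hx
      obtain ⟨i, j, hij, hne⟩ := hx
      rcases lt_or_gt_of_ne hne with h | h
      · refine ⟨(i, j), by simpa using hne, ?_⟩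
        rw [if_pos (by simpa using h)]
        exact mem_filter.mpr ⟨hp, hij⟩
      · refine ⟨(j, i), by simpa using fun h => hne h.symm, ?_⟩
        rw [if_pos (by simpa using h)]
        exact mem_filter.mpr ⟨hp, hij.symm⟩
  have : Mcount k A = (SolSet k A).card := rfl
  rw [this]
  refine (card_le_card h1).trans ((card_union_le _ _).trans (add_le_add card_biUnion_le ?_))
  refine card_biUnion_le.trans (sum_le_sum fun q _ => ?_)
  split_ifs
  · exact le_rfl
  · exact cnt2_swap k A _ _

theorem small_case {N : ℕ} [NeZero N] (hNp : N.Prime) (K : ℕ) (A : Finset ℤ)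
    (hA : 20 * (K+2) ^ 6 ≤ A.card) (B : ℤ) (hB0 : 0 ≤ B) (hB : ∀ a ∈ A, |a| ≤ B)
    (hN : 2 * ((K+2 : ℕ) : ℤ) * B < N)
    (hNk : 2 < N) (hw : IsWeakBkSet (K+2) A) :
    (Mcount (K+2) A : ℝ) ≤ 4 * (((K+2 : ℕ):ℝ)^2 * A.card)^(K+2) := by
  have hM := Mcount_eq (N := N) (K+2) A B hB hN
  have hM1 := Mcount_eq (N := N) (K+1) A B hB (by push_cast at hN ⊢; nlinarith)
  have hM2 := (pp_norm_sum (N := N) hNp 2 (by norm_num) hNk A (2*(K+2))).trans hM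
  have hNpos : (0:ℝ) < N := by exact_mod_cast hNp.pos
  have hc := cover (K+2) A hw
  set R := ∑ t : ZMod N, ‖pp (zt t) 2 A‖ * ‖pp (zt t) 1 A‖ ^ (2*K+2) with hR
  have hR0 : 0 ≤ R := sum_nonneg fun _ _ => by positivity
  set k : ℝ := ((K+2 : ℕ):ℝ) with hk
  have hk2 : (2:ℝ) ≤ k := by rw [hk]; push_cast; linarith [(Nat.cast_nonneg K : (0:ℝ) ≤ K)]
  set n : ℝ := (A.card : ℝ) with hn
  have hn0 : 0 ≤ n := by positivity
  have hAR : 20 * k^6 ≤ n := by rw [hk, hn]; exact_mod_cast hA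
  set M : ℝ := (Mcount (K+2) A : ℝ) with hMd
  have hM0 : 0 ≤ M := by positivity
  have hc1 : N * M ≤ k^2 * (n * (N * Mcount (K+1) A)) + k^2 * R := by
    have a1 : (∑ q : Fin (K+2) × Fin (K+2),
        ((SolSet (K+2) A).filter (fun p => p.1 q.1 = p.2 q.2)).card : ℝ) ≤ k^2 * (n * Mcount (K+1) A) := by
      refine (sum_le_sum (g := fun _ => n * Mcount (K+1) A) fun q _ => ?_).trans ?_
      · rw [hn]; exact_mod_cast cnt1 (K+1) A q.1 q.2
      · simp only [sum_const, card_univ, Fintype.card_prod, Fintype.card_fin, nsmul_eq_mul]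
        push_cast; rw [hk]; push_cast; apply le_of_eq; ring
    have a2 : N * (∑ q ∈ (univ : Finset (Fin (K+2) × Fin (K+2))).filter (fun q => q.1 ≠ q.2),
        ((SolSet (K+2) A).filter (fun p => p.1 q.1 = p.1 q.2)).card : ℝ) ≤ k^2 * R := by
      rw [mul_sum]
      refine (sum_le_sum (g := fun _ => R) fun q hq => ?_).trans ?_
      · exact cnt2 K A q.1 q.2 (mem_filter.mp hq).2
      · rw [sum_const, nsmul_eq_mul]
        gcongr
        have : (((univ : Finset (Fin (K+2) × Fin (K+2))).filter (fun q => q.1 ≠ q.2)).card : ℝ) ≤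
          ((univ : Finset (Fin (K+2) × Fin (K+2))).card : ℝ) := by
          exact_mod_cast card_filter_le _ _
        refine this.trans (le_of_eq ?_)
        simp only [card_univ, Fintype.card_prod, Fintype.card_fin]
        push_cast; rw [hk]; push_cast; ring
    have hcR : M ≤ (∑ q : Fin (K+2) × Fin (K+2),
        ((SolSet (K+2) A).filter (fun p => p.1 q.1 = p.2 q.2)).card : ℝ) +
        (∑ q ∈ (univ : Finset (Fin (K+2) × Fin (K+2))).filter (fun q => q.1 ≠ q.2),
        ((SolSet (K+2) A).filter (fun p => p.1 q.1 = p.1 q.2)).card : ℝ) := by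
      rw [hMd]; exact_mod_cast hc
    have := mul_le_mul_of_nonneg_left (hcR.trans (add_le_add_left a1 _)) hNpos.le
    linarith
  set s := Real.sqrt n with hs
  have hs2 : s^2 = n := Real.sq_sqrt hn0
  have hs0 : 0 ≤ s := Real.sqrt_nonneg _
  have hsk : 4.47 * k^3 ≤ s := by
    apply Real.le_sqrt_of_sq_le
    have : 0 ≤ k^6 := by positivity
    nlinarith
  have hRs : s * R ≤ N * (2 * M + n^(K+2)) := by
    rw [hR, mul_sum]
    refine (sum_le_sum fun t _ => three_max _ _ s (norm_nonneg (pp (zt t) 2 A))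
      (norm_nonneg (pp (zt t) 1 A)) hs0 K).trans ?_
    rw [sum_add_distrib, sum_add_distrib, hM, hM2, pow_mul s, hs2]
    simp only [sum_const, card_univ, ZMod.card, nsmul_eq_mul]
    apply le_of_eq; ring
  have hk1n : n ≤ k^2*n := le_mul_of_one_le_left hn0 (by nlinarith)
  have hpow : n^(K+2) ≤ (k^2*n)^(K+2) := by gcongr
  have hp0 : 0 ≤ n^(K+2) := by positivity
  by_cases hMn : M ≤ n^(K+2)
  · linarith
  push Not at hMn
  have hRs2 : s * R ≤ N * (3*M) := hRs.trans (by gcongr; linarith)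
  have hRs3 : k^3 * R ≤ 0.68 * (N*M) := by
    have : 4.47 * k^3 * R ≤ s * R := by gcongr
    have : 0 ≤ N * M := by positivity
    nlinarith
  have hy : k * (k^2 * n) * (N * Mcount (K+1) A) ≤ N * (k^2*n)^(K+2) + (k-1) * (N*M) := by
    rw [← hM1, ← hM, mul_sum, mul_sum]
    have : (N:ℝ) * (k^2*n)^(K+2) = ∑ t : ZMod N, (k^2*n)^(K+2) := by
      simp [ZMod.card]
    rw [this, ← sum_add_distrib]
    refine sum_le_sum fun t _ => ?_
    have := young (k^2*n) (‖pp (zt t) 1 A‖^2) (by positivity) (by positivity) (K+1)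
    rw [pow_mul, pow_mul]
    have e1 : ((K+1:ℕ):ℝ) = k - 1 := by rw [hk]; push_cast; ring
    rw [e1] at this
    have e2 : k - 1 + 1 = k := by ring
    rw [e2] at this
    exact this
  have hf : N * M ≤ N * (4 * (k^2*n)^(K+2)) := by
    have := mul_le_mul_of_nonneg_left hc1 (by linarith : (0:ℝ) ≤ k)
    have p : 0 ≤ N * M := by positivity
    nlinarith
  exact le_of_mul_le_mul_left hf hNpos

theorem one_case (A : Finset ℤ) : Mcount 1 A ≤ A.card := by
  have h := cnt1 0 A 0 0
  have h2 : (SolSet (0+1) A).filter (fun p => p.1 0 = p.2 0) = SolSet 1 A := by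
    apply filter_true_of_mem
    intro p hp
    have := ((mem_SolSet _ _ _).mp hp).2.2
    simpa using this
  have h3 : Mcount 0 A ≤ 1 := by
    rw [Mcount]
    refine (card_filter_le _ _).trans ?_
    rw [card_product]; simp
  have h4 : Mcount 1 A = (SolSet 1 A).card := rfl
  rw [h2, ← h4] at h
  nlinarith

theorem Mk_main_bound (k : ℕ) (hk : 1 ≤ k) (A : Finset ℤ)
    (hA : 20 * k ^ 6 ≤ A.card) (hweak : IsWeakBkSet k A) :
    (Mcount k A : ℝ) ≤ 2 * k * 8 ^ k * (k : ℝ) ^ ((3 * (k : ℝ)) / 2) * (A.card : ℝ) ^ k := by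
  have hr : (k : ℝ) ^ ((3 * (k : ℝ)) / 2) = ((k:ℝ) * Real.sqrt k)^k := by
    have h0 : (0:ℝ) < k := by exact_mod_cast hk
    have e : (3 * (k : ℝ)) / 2 = (1 + 1/2) * (k:ℝ) := by ring
    rw [e, Real.rpow_mul h0.le, Real.rpow_natCast, Real.rpow_add h0, Real.rpow_one, Real.sqrt_eq_rpow]
  rw [hr]
  set s := Real.sqrt k with hs
  have hs2 : s^2 = k := Real.sq_sqrt (by positivity)
  have hs0 : 0 ≤ s := Real.sqrt_nonneg _
  set n : ℝ := (A.card : ℝ) with hn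
  have hn0 : 0 ≤ n := by positivity
  have hgoal : 2 * (k:ℝ) * 8 ^ k * ((k:ℝ) * s)^k * n ^ k = 2 * k * (8 * (k * s) * n)^k := by
    rw [mul_pow (8 * ((k:ℝ) * s)) n, mul_pow 8 ((k:ℝ) * s)]; ring
  rw [hgoal]
  set B : ℤ := ∑ a ∈ A, |a| with hBd
  have hB : ∀ a ∈ A, |a| ≤ B := fun a ha =>
    single_le_sum (f := fun a : ℤ => |a|) (fun _ _ => abs_nonneg _) ha
  have hB0 : 0 ≤ B := sum_nonneg fun _ _ => abs_nonneg _
  obtain ⟨N, hNl, hNp⟩ := Nat.exists_infinite_primes ((2 * k * B).toNat + k + 3)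
  haveI : NeZero N := ⟨hNp.ne_zero⟩
  have hN : 2 * k * B < N := by
    have := Int.self_le_toNat (2 * k * B)
    have : (((2 * k * B).toNat + k + 3 : ℕ) : ℤ) ≤ N := by exact_mod_cast hNl
    push_cast at this
    omega
  by_cases hk65 : 65 ≤ k
  · have hkR : (65:ℝ) ≤ k := by exact_mod_cast hk65
    refine (big_case hNp k hk65 A hA B hB hN (by omega) hweak).trans ?_
    have h7 : 7 ≤ s := Real.le_sqrt_of_sq_le (by linarith)
    refine mul_le_mul (by linarith) (pow_le_pow_left₀ (by positivity) ?_ k) (by positivity) (by positivity)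
    have : 49 * (k:ℝ) ≤ 8 * (k * s) := by nlinarith
    gcongr
  · rcases Nat.lt_or_ge k 2 with h | h
    · obtain rfl : k = 1 := by omega
      have h1 : (Mcount 1 A : ℝ) ≤ n := by rw [hn]; exact_mod_cast one_case A
      have : s = 1 := by rw [hs]; simp
      rw [this]; push_cast; linarith
    · obtain ⟨K, rfl⟩ : ∃ K, k = K + 2 := ⟨k - 2, by omega⟩
      refine (small_case hNp K A hA B hB0 hB hN (by omega) hweak).trans ?_
      have hkR : (2:ℝ) ≤ ((K+2:ℕ):ℝ) := by exact_mod_cast h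
      have h8 : s ≤ 8 := by
        rw [hs, Real.sqrt_le_left (by norm_num)]
        have : K + 2 ≤ 64 := by omega
        have : ((K+2:ℕ):ℝ) ≤ 64 := by exact_mod_cast this
        linarith
      gcongr
      · linarith
      · have : ((K+2:ℕ):ℝ) ≤ 8 * s := by rw [← hs2]; nlinarith
        nlinarith
end

section
/- Let A ⊆ [N] be a B_k*-set with N ≥ (2k^{9/2})^k. Then |A| ≤ 16 · k^{3/2} · N^{1/k}. -/
open Finset

/-- Sum over injective sequences in `S` of products of the letters of the word. -/
noncomputable def PP : Finset ℤ → List (ℤ → ℂ) → ℂ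
  | _, [] => 1
  | S, g :: w => ∑ a ∈ S, g a * PP (S.erase a) w

lemma PP_nil (S : Finset ℤ) : PP S [] = 1 := by simp [PP]
lemma PP_cons (S : Finset ℤ) (g : ℤ → ℂ) (w) :
    PP S (g :: w) = ∑ a ∈ S, g a * PP (S.erase a) w := by simp [PP]

lemma PP_erase (w : List (ℤ → ℂ)) : ∀ (S : Finset ℤ) (a : ℤ), a ∈ S →
    PP S w = PP (S.erase a) w +
      ∑ i : Fin w.length, w.get i a * PP (S.erase a) (w.eraseIdx i) := by
  induction w with
  | nil => intro S a _; simp [PP_nil]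
  | cons g w ih =>
    intro S a ha
    rw [PP_cons, ← Finset.add_sum_erase _ _ ha]
    have h1 : ∑ b ∈ S.erase a, g b * PP (S.erase b) w
        = ∑ b ∈ S.erase a, (g b * PP ((S.erase a).erase b) w +
          ∑ i : Fin w.length, w.get i a * (g b * PP ((S.erase a).erase b) (w.eraseIdx i))) := by
      refine Finset.sum_congr rfl fun b hb => ?_
      have hab : a ∈ S.erase b := by
        rw [Finset.mem_erase] at hb ⊢
        exact ⟨fun h => hb.1 h.symm, ha⟩
      rw [ih (S.erase b) a hab, Finset.erase_right_comm, mul_add, Finset.mul_sum]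
      congr 1
      refine Finset.sum_congr rfl fun i _ => ?_
      ring
    rw [h1, Finset.sum_add_distrib, ← PP_cons, Finset.sum_comm]
    have h2 : ∀ i : Fin w.length,
        ∑ b ∈ S.erase a, w.get i a * (g b * PP ((S.erase a).erase b) (w.eraseIdx i))
        = w.get i a * PP (S.erase a) (g :: w.eraseIdx i) := by
      intro i
      rw [PP_cons, Finset.mul_sum]
    rw [Finset.sum_congr rfl fun i _ => h2 i]
    have h3 : ∑ i : Fin (g :: w).length, (g :: w).get i a * PP (S.erase a) ((g :: w).eraseIdx i)
      = g a * PP (S.erase a) w + ∑ i : Fin w.length, w.get i a * PP (S.erase a) (g :: w.eraseIdx i) := by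
      have := Fin.sum_univ_succ (n := w.length)
        (fun i : Fin (w.length + 1) => (g :: w).get i a * PP (S.erase a) ((g :: w).eraseIdx i))
      simp only [List.get_eq_getElem, Fin.val_zero, List.eraseIdx_cons_zero, Fin.val_succ, List.getElem_cons_succ, List.eraseIdx_cons_succ] at this ⊢
      exact this
    rw [h3]
    ring

lemma PP_perm {w w' : List (ℤ → ℂ)} (h : w.Perm w') : ∀ S : Finset ℤ, PP S w = PP S w' := by
  induction h with
  | nil => intro S; rfl
  | cons g _ ih => intro S; rw [PP_cons, PP_cons]; simp only [ih]
  | swap g h w =>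
    intro S
    simp only [PP_cons, Finset.mul_sum]
    rw [Finset.sum_sigma', Finset.sum_sigma']
    refine Finset.sum_bij' (fun p _ => ⟨p.2, p.1⟩) (fun p _ => ⟨p.2, p.1⟩) ?_ ?_ ?_ ?_ ?_
    · rintro ⟨a, b⟩ h; simp only [Finset.mem_sigma, Finset.mem_erase] at h ⊢; grind
    · rintro ⟨a, b⟩ h; simp only [Finset.mem_sigma, Finset.mem_erase] at h ⊢; grind
    · intros; rfl
    · intros; rfl
    · rintro ⟨a, b⟩ h
      simp only
      rw [Finset.erase_right_comm]; ring
  | trans _ _ h1 h2 => intro S; rw [h1, h2]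

lemma PP_step (S : Finset ℤ) (g : ℤ → ℂ) (w : List (ℤ → ℂ)) :
    PP S (g :: w) = (∑ a ∈ S, g a) * PP S w
      - ∑ a ∈ S, g a * ∑ i : Fin w.length, w.get i a * PP (S.erase a) (w.eraseIdx i) := by
  rw [PP_cons, Finset.sum_mul, ← Finset.sum_sub_distrib]
  refine Finset.sum_congr rfl fun a ha => ?_
  rw [PP_erase w S a ha]; ring

/-- error term bound -/
lemma err_bound (S : Finset ℤ) (g : ℤ → ℂ) (w : List (ℤ → ℂ)) (B : ℝ)
    (hg : ∀ a, ‖g a‖ ≤ 1) (hw : ∀ h ∈ w, ∀ a, ‖h a‖ ≤ 1)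
    (hP : ∀ a ∈ S, ∀ i : Fin w.length, ‖PP (S.erase a) (w.eraseIdx i)‖ ≤ B) :
    ‖PP S (g :: w) - (∑ a ∈ S, g a) * PP S w‖ ≤ S.card * (w.length * B) := by
  rw [PP_step, sub_sub_cancel_left, norm_neg]
  refine (norm_sum_le _ _).trans ?_
  rw [← nsmul_eq_mul]
  refine Finset.sum_le_card_nsmul _ _ _ fun a ha => ?_
  rw [norm_mul]
  have : ‖∑ i : Fin w.length, w.get i a * PP (S.erase a) (w.eraseIdx i)‖ ≤ w.length * B := by
    refine (norm_sum_le _ _).trans ?_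
    have := Finset.sum_le_card_nsmul (Finset.univ : Finset (Fin w.length))
      (fun i => ‖w.get i a * PP (S.erase a) (w.eraseIdx i)‖) B (fun i _ => by
        rw [norm_mul]
        have h1 := hw _ (List.get_mem w i) a
        have h2 := hP a ha i
        have h3 := norm_nonneg (PP (S.erase a) (w.eraseIdx i))
        calc _ ≤ 1 * ‖PP (S.erase a) (w.eraseIdx i)‖ := by gcongr
          _ ≤ B := by linarith)
    simpa using this
  calc _ ≤ 1 * (w.length * B) := by gcongr; exact hg a
    _ = _ := one_mul _

lemma PP_upper (Λ : Set (ℤ → ℂ)) (hΛ : ∀ g ∈ Λ, ∀ a, ‖g a‖ ≤ 1) (S : Finset ℤ) (k : ℕ)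
    (F l : ℝ) (hl : 0 < l)
    (hF : ∀ g ∈ Λ, ∀ T ⊆ S, S.card ≤ T.card + k → ‖∑ a ∈ T, g a‖ ≤ F)
    (hFl : F * l + S.card * (2 * k) ≤ l ^ 2) :
    ∀ (m : ℕ) (w : List (ℤ → ℂ)), w.length = m → (∀ g ∈ w, g ∈ Λ) → ∀ T ⊆ S,
      2 * S.card + m ≤ 2 * T.card + 2 * k → ‖PP T w‖ ≤ l ^ m := by
  intro m
  induction m using Nat.strong_induction_on with
  | _ m ih =>
    intro w hw hwΛ T hT hc
    cases w with
    | nil => simp at hw; subst hw; simp [PP_nil]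
    | cons g w =>
      simp only [List.length_cons] at hw
      simp only [List.mem_cons, forall_eq_or_imp] at hwΛ
      obtain ⟨hgΛ, hwΛ⟩ := hwΛ
      have hTF := hF g hgΛ T hT (by omega)
      have h1 := ih w.length (by omega) w rfl hwΛ T hT (by omega)
      have hTS : T.card ≤ S.card := Finset.card_le_card hT
      have hpos : 0 ≤ l ^ (w.length - 1) := by positivity
      have h2 := err_bound T g w (l ^ (w.length - 1)) (hΛ g hgΛ)
        (fun h hh => hΛ h (hwΛ h hh)) (by
          intro a ha i
          have hi := i.2
          refine ih (w.length - 1) (by omega) _ (by rw [List.length_eraseIdx]; simp [hi])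
            (fun h hh => hwΛ h (List.mem_of_mem_eraseIdx hh)) _
            ((Finset.erase_subset _ _).trans hT) ?_
          have := Finset.card_erase_add_one ha
          omega)
      have h3 : ‖PP T (g :: w)‖ ≤ F * l ^ w.length + T.card * (w.length * l ^ (w.length - 1)) := by
        have := norm_le_norm_add_norm_sub ((∑ a ∈ T, g a) * PP T w) (PP T (g :: w))
        have h4 : ‖(∑ a ∈ T, g a) * PP T w‖ ≤ F * l ^ w.length := by
          rw [norm_mul]
          have := norm_nonneg (∑ a ∈ T, g a)
          have h0F : 0 ≤ F := this.trans hTF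
          gcongr
        rw [norm_sub_rev] at this
        have h5 := norm_sub_rev ((∑ a ∈ T, g a) * PP T w) (PP T (g :: w))
        linarith
      refine h3.trans ?_
      rw [← hw]
      rcases Nat.eq_zero_or_pos w.length with h0 | h0
      · rw [h0]; simp
        have : 0 ≤ (S.card : ℝ) * (2 * k) := by positivity
        have : F * l ≤ l * l := by nlinarith
        exact le_of_mul_le_mul_right this hl
      · obtain ⟨j, hj⟩ := Nat.exists_eq_add_of_lt h0
        have hj' : w.length = j + 1 := by omega
        have hw2 : (w.length : ℝ) ≤ 2 * k := by exact_mod_cast (by omega : w.length ≤ 2 * k)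
        have hTS' : (T.card : ℝ) ≤ S.card := by exact_mod_cast hTS
        have e1 : l ^ w.length = l ^ (w.length - 1) * l := by rw [hj']; simp [pow_succ]
        have e2 : l ^ (w.length + 1) = l ^ (w.length - 1) * l ^ 2 := by
          rw [hj', ← pow_add]; congr 1
        rw [e2, e1]
        have : (T.card : ℝ) * (w.length * l ^ (w.length - 1)) ≤ S.card * (2 * k * l ^ (w.length - 1)) := by
          gcongr
        calc _ ≤ F * (l ^ (w.length - 1) * l) + S.card * (2 * k * l ^ (w.length - 1)) := by gcongr
          _ = l ^ (w.length - 1) * (F * l + S.card * (2 * k)) := by ring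
          _ ≤ _ := by gcongr

lemma PP_lower (Λ : Set (ℤ → ℂ)) (hΛ : ∀ g ∈ Λ, ∀ a, ‖g a‖ ≤ 1) (S : Finset ℤ) (k : ℕ)
    (G : ℝ) (hG0 : 0 < G)
    (hG : ∀ g ∈ Λ, ∀ T ⊆ S, S.card ≤ T.card + k → G ≤ ‖∑ a ∈ T, g a‖)
    (hGk : S.card * (2 * k) + (4 / 5) * k * G ≤ (6 / 25) * G ^ 2) (hGk' : (2 * k : ℝ) < (3 / 5) * G) :
    ∀ (m : ℕ) (w : List (ℤ → ℂ)), w.length = m → (∀ g ∈ w, g ∈ Λ) → ∀ g ∈ Λ, ∀ T ⊆ S,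
      2 * S.card + m ≤ 2 * T.card + 2 * k →
      ‖PP T (g :: w) - (∑ a ∈ T, g a) * PP T w‖ ≤ 2 / 5 * G * ‖PP T w‖ := by
  intro m
  induction m using Nat.strong_induction_on with
  | _ m ih =>
    -- consequence
    have cons : ∀ (w : List (ℤ → ℂ)), (∀ g ∈ w, g ∈ Λ) → ∀ T ⊆ S, ∀ i : Fin w.length, w.length ≤ m →
        2 * S.card + (w.length - 1) ≤ 2 * T.card + 2 * k →
        3 / 5 * G * ‖PP T (w.eraseIdx i)‖ ≤ ‖PP T w‖ := by
      intro w hw T hT i hwm hc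
      have hi := i.2
      have hp : (w.get i :: w.eraseIdx i).Perm w := List.getElem_cons_eraseIdx_perm hi
      have hlen : (w.eraseIdx i).length = w.length - 1 := by rw [List.length_eraseIdx]; simp [hi]
      have h1 := ih (w.length - 1) (by omega) (w.eraseIdx i) hlen
        (fun h hh => hw h (List.mem_of_mem_eraseIdx hh)) (w.get i) (hw _ (List.get_mem w i)) T hT hc
      rw [PP_perm hp] at h1
      have h2 := hG (w.get i) (hw _ (List.get_mem w i)) T hT (by omega)
      have h3 := norm_le_norm_add_norm_sub (PP T w) ((∑ a ∈ T, w.get i a) * PP T (w.eraseIdx i))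
      have h4 : G * ‖PP T (w.eraseIdx i)‖ ≤ ‖(∑ a ∈ T, w.get i a) * PP T (w.eraseIdx i)‖ := by
        rw [norm_mul]; gcongr
      have h5 := norm_sub_rev (PP T w) ((∑ a ∈ T, w.get i a) * PP T (w.eraseIdx i))
      linarith
    intro w hw hwΛ g hg T hT hc
    set c : ℝ := 3 / 5 * G with hcdef
    have hc0 : 0 < c := by positivity
    have key : ∀ a ∈ T, ∀ i : Fin w.length,
        ‖PP (T.erase a) (w.eraseIdx i)‖ ≤ ‖PP T w‖ / (c - 2 * k) := by
      intro a ha i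
      have hi := i.2
      rw [le_div_iff₀ (by linarith)]
      have h1 := cons w hwΛ T hT i hw.le (by omega)
      set v := w.eraseIdx i with hv
      have hvlen : v.length = w.length - 1 := by rw [hv, List.length_eraseIdx]; simp [hi]
      have hvΛ : ∀ g ∈ v, g ∈ Λ := fun h hh => hwΛ h (List.mem_of_mem_eraseIdx hh)
      have hcard := Finset.card_erase_add_one ha
      have h2 : ∀ i : Fin v.length, ‖v.get i a * PP (T.erase a) (v.eraseIdx i)‖ ≤ ‖PP (T.erase a) v‖ / c := by
        intro i'
        have hi' := i'.2
        rw [le_div_iff₀ hc0, norm_mul]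
        have := cons v hvΛ (T.erase a) ((Finset.erase_subset _ _).trans hT) i' (by omega) (by omega)
        have h6 := hΛ _ (hvΛ _ (List.get_mem v i')) a
        calc _ ≤ 1 * ‖PP (T.erase a) (v.eraseIdx i')‖ * c := by gcongr
          _ ≤ _ := by linarith
      have h3 : ‖∑ i : Fin v.length, v.get i a * PP (T.erase a) (v.eraseIdx i)‖
          ≤ 2 * k * (‖PP (T.erase a) v‖ / c) := by
        refine (norm_sum_le _ _).trans ?_
        have := Finset.sum_le_card_nsmul (Finset.univ : Finset (Fin v.length)) _ _ (fun i _ => h2 i)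
        refine this.trans ?_
        simp only [Finset.card_univ, Fintype.card_fin, nsmul_eq_mul]
        have hTS : T.card ≤ S.card := Finset.card_le_card hT
        have : (v.length : ℝ) ≤ 2 * k := by exact_mod_cast (by omega : v.length ≤ 2 * k)
        gcongr
      have h4 := PP_erase v T a ha
      have h5 : ‖PP (T.erase a) v‖ - 2 * k * (‖PP (T.erase a) v‖ / c) ≤ ‖PP T v‖ := by
        have := norm_sub_le_norm_add (PP (T.erase a) v) (∑ i : Fin v.length, v.get i a * PP (T.erase a) (v.eraseIdx i))
        rw [← h4] at this
        linarith
      have h6 : ‖PP (T.erase a) v‖ * (c - 2 * k) = c * (‖PP (T.erase a) v‖ - 2 * k * (‖PP (T.erase a) v‖ / c)) := by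
        field_simp
      rw [h6]
      exact (mul_le_mul_of_nonneg_left h5 hc0.le).trans h1
    have h1 := err_bound T g w (‖PP T w‖ / (c - 2 * k))
      (hΛ g hg) (fun h hh => hΛ h (hwΛ h hh)) key
    refine h1.trans ?_
    have hTS : T.card ≤ S.card := Finset.card_le_card hT
    have hw2 : (w.length : ℝ) ≤ 2 * k := by exact_mod_cast (by omega : w.length ≤ 2 * k)
    have hTS' : (T.card : ℝ) ≤ S.card := by exact_mod_cast hTS
    have h7 : 0 < c - 2 * k := by linarith
    calc (T.card : ℝ) * (w.length * (‖PP T w‖ / (c - 2 * k)))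
        ≤ S.card * (2 * k * (‖PP T w‖ / (c - 2 * k))) := by gcongr
      _ = (S.card * (2 * k)) * (‖PP T w‖ / (c - 2 * k)) := by ring
      _ ≤ (2 / 5 * G * (c - 2 * k)) * (‖PP T w‖ / (c - 2 * k)) := by
          refine mul_le_mul_of_nonneg_right ?_ (div_nonneg (norm_nonneg _) h7.le)
          rw [hcdef]; nlinarith
      _ = _ := by field_simp

/-- alternating word -/
def altw (z zc : ℤ → ℂ) : ℕ → List (ℤ → ℂ)
  | 0 => []
  | j + 1 => z :: zc :: altw z zc j

lemma altw_length (z zc : ℤ → ℂ) (j : ℕ) : (altw z zc j).length = 2 * j := by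
  induction j with
  | zero => simp [altw]
  | succ j ih => simp [altw, ih]; ring

lemma altw_mem (z zc : ℤ → ℂ) (j : ℕ) : ∀ g ∈ altw z zc j, g = z ∨ g = zc := by
  induction j with
  | zero => simp [altw]
  | succ j ih => simp only [altw, List.mem_cons]; grind

lemma altw_perm (z zc : ℤ → ℂ) (j : ℕ) : (altw z zc j).Perm (altw zc z j) := by
  induction j with
  | zero => simp [altw]
  | succ j ih => exact (List.Perm.swap _ _ _).trans ((ih.cons _).cons _)

lemma PP_conj (z zc : ℤ → ℂ) (hz : ∀ a, (starRingEnd ℂ) (z a) = zc a) (j : ℕ) :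
    ∀ S, (starRingEnd ℂ) (PP S (altw z zc j)) = PP S (altw zc z j) := by
  have hz' : ∀ a, (starRingEnd ℂ) (zc a) = z a := fun a => by rw [← hz]; simp
  induction j with
  | zero => intro S; simp [altw, PP_nil]
  | succ j ih => intro S; simp [altw, PP_cons, map_sum, hz, hz', ih]

lemma PP_im (z zc : ℤ → ℂ) (hz : ∀ a, (starRingEnd ℂ) (z a) = zc a) (j : ℕ) (S : Finset ℤ) :
    (PP S (altw z zc j)).im = 0 := by
  rw [← Complex.conj_eq_iff_im, PP_conj z zc hz, PP_perm (altw_perm z zc j)]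

lemma PP_pos (z zc : ℤ → ℂ) (hz : ∀ a, (starRingEnd ℂ) (z a) = zc a) (S : Finset ℤ) (k : ℕ)
    (G : ℝ) (hG0 : 0 < G) (hG : G ≤ ‖∑ a ∈ S, z a‖)
    (H : ∀ (w : List (ℤ → ℂ)), w.length ≤ 2 * k → (∀ g ∈ w, g = z ∨ g = zc) →
      ∀ g, (g = z ∨ g = zc) →
      ‖PP S (g :: w) - (∑ a ∈ S, g a) * PP S w‖ ≤ 2 / 5 * G * ‖PP S w‖) :
    ∀ j, j ≤ k → 0 ≤ (PP S (altw z zc j)).re := by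
  intro j
  induction j with
  | zero => intro _; simp [altw, PP_nil]
  | succ j ih =>
    intro hj
    have hr := ih (by omega)
    have him := PP_im z zc hz j S
    set p := PP S (altw z zc j) with hp
    have hlen := altw_length z zc j
    have hmem := altw_mem z zc j
    have h1 := H (altw z zc j) (by omega) hmem zc (Or.inr rfl)
    have h2 := H (zc :: altw z zc j) (by simp; omega) (by
      simp only [List.mem_cons]; grind) z (Or.inl rfl)
    change 0 ≤ (PP S (z :: zc :: altw z zc j)).re
    rw [← hp] at h1
    set Q := PP S (zc :: altw z zc j)
    set R := PP S (z :: zc :: altw z zc j)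
    set f := ∑ a ∈ S, z a with hf
    have hfc : ∑ a ∈ S, zc a = (starRingEnd ℂ) f := by rw [hf, map_sum]; simp [hz]
    rw [hfc] at h1
    have hpr : p = (p.re : ℂ) := by apply Complex.ext <;> simp [him]
    have hpn : ‖p‖ = p.re := by rw [hpr, Complex.norm_real]; simp [abs_of_nonneg hr]
    have hQ : ‖Q‖ ≤ ‖f‖ * ‖p‖ + 2 / 5 * G * ‖p‖ := by
      have := norm_add_le ((starRingEnd ℂ) f * p) (Q - (starRingEnd ℂ) f * p)
      rw [add_sub_cancel, norm_mul, RCLike.norm_conj] at this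
      linarith
    have hR : ‖R - f * (starRingEnd ℂ) f * p‖ ≤ 24 / 25 * (‖f‖ ^ 2 * ‖p‖) := by
      have e : R - f * (starRingEnd ℂ) f * p = (R - f * Q) + f * (Q - (starRingEnd ℂ) f * p) := by ring
      rw [e]
      refine (norm_add_le _ _).trans ?_
      rw [norm_mul f]
      have a1 : ‖f‖ * ‖Q - (starRingEnd ℂ) f * p‖ ≤ ‖f‖ * (2 / 5 * ‖f‖ * ‖p‖) := by
        refine mul_le_mul_of_nonneg_left (h1.trans ?_) (norm_nonneg _)
        gcongr
      have a2 : ‖Q‖ ≤ 7 / 5 * ‖f‖ * ‖p‖ := by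
        have : 2 / 5 * G * ‖p‖ ≤ 2 / 5 * ‖f‖ * ‖p‖ := by gcongr
        linarith
      have a3 : ‖R - f * Q‖ ≤ 2 / 5 * ‖f‖ * (7 / 5 * ‖f‖ * ‖p‖) := by
        refine h2.trans ?_
        gcongr
      nlinarith
    have hre : (f * (starRingEnd ℂ) f * p).re = ‖f‖ ^ 2 * ‖p‖ := by
      rw [Complex.mul_conj, hpn, Complex.normSq_eq_norm_sq, Complex.re_ofReal_mul]
    have h9 := (Complex.abs_re_le_norm (R - f * (starRingEnd ℂ) f * p)).trans hR
    rw [Complex.sub_re, hre] at h9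
    have := (abs_le.1 h9).1
    have : 0 ≤ ‖f‖ ^ 2 * ‖p‖ := by positivity
    linarith

lemma PP_one (w : List (ℤ → ℂ)) (hw : ∀ g ∈ w, ∀ a, g a = 1) :
    ∀ S : Finset ℤ, PP S w = (S.card.descFactorial w.length : ℕ) := by
  induction w with
  | nil => intro S; simp [PP_nil]
  | cons g w ih =>
    intro S
    simp only [List.mem_cons, forall_eq_or_imp] at hw
    rw [PP_cons, Finset.sum_congr rfl (g := fun a => (((S.card - 1).descFactorial w.length : ℕ) : ℂ))
      (fun a ha => by rw [hw.1, ih hw.2, Finset.card_erase_of_mem ha, one_mul])]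
    rw [Finset.sum_const, nsmul_eq_mul, List.length_cons]
    cases h : S.card with
    | zero => simp
    | succ n => rw [Nat.succ_descFactorial_succ]; push_cast; simp

lemma geom_zero (q : ℕ) (hq : 0 < q) (ζ : ℂ) (hζ : IsPrimitiveRoot ζ q) (m : ℤ)
    (h : ∑ t ∈ range q, (ζ ^ t) ^ m ≠ 0) : (q : ℤ) ∣ m := by
  by_contra hm
  apply h
  have h1 : ζ ^ m ≠ 1 := fun h => hm ((hζ.zpow_eq_one_iff_dvd m).1 h)
  have h2 : ∀ t : ℕ, (ζ ^ t) ^ m = (ζ ^ m) ^ t := by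
    intro t
    rw [← zpow_natCast, ← zpow_natCast, ← zpow_mul, ← zpow_mul, mul_comm]
  simp only [h2]
  have h3 := mul_geom_sum (ζ ^ m) q
  have h4 : (ζ ^ m) ^ q = 1 := by
    rw [← h2, hζ.pow_eq_one, one_zpow]
  rw [h4, sub_self] at h3
  exact (mul_eq_zero.1 h3).resolve_left (sub_ne_zero.2 h1)

lemma extract (q : ℕ) (hq : 0 < q) (ζ : ℂ) (hζ : IsPrimitiveRoot ζ q) (j : ℕ) :
    ∀ (S : Finset ℤ) (m : ℤ),
    ∑ t ∈ range q, (ζ ^ t) ^ m * PP S (altw (fun a => (ζ ^ t) ^ a) (fun a => (ζ ^ t) ^ (-a)) j) ≠ 0 →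
    ∃ x y : Fin j → ℤ, (∀ i, x i ∈ S) ∧ (∀ i, y i ∈ S) ∧ Function.Injective x ∧
      Function.Injective y ∧ (∀ i i', x i ≠ y i') ∧ (q : ℤ) ∣ m + ∑ i, x i - ∑ i, y i := by
  have hζ0 : ζ ≠ 0 := hζ.ne_zero hq.ne'
  induction j with
  | zero =>
    intro S m h
    refine ⟨fun i => i.elim0, fun i => i.elim0, fun i => i.elim0, fun i => i.elim0,
      fun i => i.elim0, fun i => i.elim0, fun i => i.elim0, ?_⟩
    simp only [altw, PP_nil, mul_one] at h
    simpa using geom_zero q hq ζ hζ m h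
  | succ j ih =>
    intro S m h
    simp only [altw, PP_cons, Finset.mul_sum] at h
    rw [Finset.sum_comm] at h
    obtain ⟨a, ha, h⟩ := Finset.exists_ne_zero_of_sum_ne_zero h
    rw [Finset.sum_comm] at h
    obtain ⟨b, hb, h⟩ := Finset.exists_ne_zero_of_sum_ne_zero h
    obtain ⟨x, y, hx, hy, hxi, hyi, hxy, hd⟩ := ih ((S.erase a).erase b) (m + a - b) (by
      convert h using 2 with t ht
      have : ζ ^ t ≠ 0 := pow_ne_zero _ hζ0
      rw [sub_eq_add_neg, zpow_add₀ this, zpow_add₀ this]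
      ring)
    simp only [Finset.mem_erase] at hx hy hb
    refine ⟨Fin.cons a x, Fin.cons b y, ?_, ?_, ?_, ?_, ?_, ?_⟩
    · intro i; refine Fin.cases ?_ (fun i => ?_) i
      · simpa using ha
      · simpa using (hx i).2.2
    · intro i; refine Fin.cases ?_ (fun i => ?_) i
      · simpa using hb.2
      · simpa using (hy i).2.2
    · rw [Fin.cons_injective_iff]; refine ⟨?_, hxi⟩
      rintro ⟨i, hi⟩; exact (hx i).2.1 hi
    · rw [Fin.cons_injective_iff]; refine ⟨?_, hyi⟩
      rintro ⟨i, hi⟩; exact (hy i).1 hi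
    · intro i i'
      refine Fin.cases ?_ (fun i => ?_) i <;> refine Fin.cases ?_ (fun i' => ?_) i'
      · simpa using fun h => hb.1 h.symm
      · simpa using fun h => (hy i').2.1 h.symm
      · simpa using (hx i).1
      · simpa using hxy i i'
    · simp only [Fin.sum_univ_succ, Fin.cons_zero, Fin.cons_succ]
      convert hd using 1; ring

lemma sum_sub_norm (g : ℤ → ℂ) (hg : ∀ a, ‖g a‖ ≤ 1) (S T : Finset ℤ) (k : ℕ) (hT : T ⊆ S)
    (hc : S.card ≤ T.card + k) : ‖∑ a ∈ S, g a - ∑ a ∈ T, g a‖ ≤ k := by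
  rw [← Finset.sum_sdiff hT, add_sub_cancel_right]
  refine (norm_sum_le _ _).trans ?_
  refine (Finset.sum_le_card_nsmul _ _ 1 fun a _ => hg a).trans ?_
  rw [Finset.card_sdiff_of_subset hT]
  simp only [nsmul_eq_mul, mul_one]
  exact_mod_cast (by omega)

lemma pointwise (z zc : ℤ → ℂ) (hz : ∀ a, (starRingEnd ℂ) (z a) = zc a) (hz1 : ∀ a, ‖z a‖ = 1)
    (S : Finset ℤ) (k : ℕ) (hk : 1 ≤ k) (hn : 1024 * k ≤ S.card) :
    -(13 * k * S.card : ℝ) ^ k ≤ (PP S (altw z zc k)).re := by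
  have hzc1 : ∀ a, ‖zc a‖ = 1 := fun a => by rw [← hz, RCLike.norm_conj, hz1]
  have hk' : (1 : ℝ) ≤ k := by exact_mod_cast hk
  have hn' : (1024 * k : ℝ) ≤ S.card := by exact_mod_cast hn
  set n : ℝ := (S.card : ℝ) with hnn
  set s : ℝ := Real.sqrt (k * n) with hs
  have hs2 : s ^ 2 = k * n := Real.sq_sqrt (by positivity)
  have hs32 : 32 * k ≤ s := by
    rw [hs]; apply Real.le_sqrt_of_sq_le; nlinarith
  have hs0 : 0 < s := by linarith
  let Λ : Set (ℤ → ℂ) := {g | g = z ∨ g = zc}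
  have hΛ : ∀ g ∈ Λ, ∀ a, ‖g a‖ ≤ 1 := by
    rintro g (rfl | rfl) a
    · exact (hz1 a).le
    · exact (hzc1 a).le
  have hfc : ‖∑ a ∈ S, zc a‖ = ‖∑ a ∈ S, z a‖ := by
    rw [← RCLike.norm_conj (∑ a ∈ S, z a), map_sum]; simp [hz]
  have hfg : ∀ g ∈ Λ, ‖∑ a ∈ S, g a‖ = ‖∑ a ∈ S, z a‖ := by
    rintro g (rfl | rfl)
    · rfl
    · exact hfc
  rcases le_total (3 * s) ‖∑ a ∈ S, z a‖ with h | h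
  · have hp : 0 ≤ (PP S (altw z zc k)).re := by
      refine PP_pos z zc hz S k (3 * s - k) (by linarith) (by linarith) ?_ k le_rfl
      intro w hw hwm g hg
      exact PP_lower Λ hΛ S k (3 * s - k) (by linarith) (by
        intro g hg T hT hc
        have h1 := sum_sub_norm g (hΛ g hg) S T k hT hc
        have h2 := norm_le_norm_add_norm_sub (∑ a ∈ T, g a) (∑ a ∈ S, g a)
        have h4 := norm_sub_rev (∑ a ∈ T, g a) (∑ a ∈ S, g a)
        have h3 := hfg g hg
        linarith) (by nlinarith) (by linarith) w.length w rfl hwm g hg S (Finset.Subset.refl _) (by omega)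
    have : 0 ≤ (13 * k * n) ^ k := by positivity
    linarith
  · have hu := PP_upper Λ hΛ S k (3 * s + k) (18 / 5 * s) (by positivity) (by
        intro g hg T hT hc
        have h1 := sum_sub_norm g (hΛ g hg) S T k hT hc
        have h2 := norm_le_norm_add_norm_sub (∑ a ∈ S, g a) (∑ a ∈ T, g a)
        have h3 := hfg g hg
        linarith) (by nlinarith) (2 * k) (altw z zc k) (altw_length z zc k) (altw_mem z zc k) S
        (Finset.Subset.refl _) le_rfl
    have h1 : (18 / 5 * s) ^ (2 * k) ≤ (13 * k * n) ^ k := by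
      rw [pow_mul]
      gcongr
      nlinarith
    have := (abs_le.1 ((Complex.abs_re_le_norm _).trans hu)).1
    linarith

lemma core (k N : ℕ) (hk : 1 ≤ k) (A : Finset ℤ) (hA : A ⊆ Finset.Icc 1 (N : ℤ))
    (hweak : IsWeakBkSet k A) (hn : 1024 * k ≤ A.card) (hn2 : 16 * k ^ 2 ≤ A.card) :
    3 / 4 * (A.card : ℝ) ^ (2 * k) ≤ k * N * (13 * k * A.card : ℝ) ^ k := by
  set q := k * N + 1 with hq
  have hq0 : 0 < q := by omega
  obtain ⟨ζ, hζ⟩ : ∃ ζ : ℂ, IsPrimitiveRoot ζ q := ⟨_, Complex.isPrimitiveRoot_exp q hq0.ne'⟩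
  have hζn : ‖ζ‖ = 1 := hζ.norm'_eq_one hq0.ne'
  have hzero : ∑ t ∈ range q, PP A (altw (fun a => (ζ ^ t) ^ a) (fun a => (ζ ^ t) ^ (-a)) k) = 0 := by
    by_contra hne
    obtain ⟨x, y, hx, hy, hxi, hyi, hxy, hd⟩ := extract q hq0 ζ hζ k A 0 (by simpa using hne)
    have bx : ∀ x : Fin k → ℤ, (∀ i, x i ∈ A) → (k : ℤ) ≤ ∑ i, x i ∧ ∑ i, x i ≤ k * N := by
      intro x hx
      have h1 : ∀ i, 1 ≤ x i ∧ x i ≤ N := fun i => Finset.mem_Icc.1 (hA (hx i))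
      constructor
      · have := Finset.card_nsmul_le_sum (Finset.univ : Finset (Fin k)) x 1 (fun i _ => (h1 i).1)
        simpa using this
      · have := Finset.sum_le_card_nsmul (Finset.univ : Finset (Fin k)) x N (fun i _ => (h1 i).2)
        simpa using this
    have b1 := bx x hx
    have b2 := bx y hy
    have : 0 + ∑ i, x i - ∑ i, y i = 0 := by
      apply Int.eq_zero_of_abs_lt_dvd hd
      rw [abs_lt, hq]
      push_cast
      constructor <;> linarith
    obtain ⟨i, j, hij⟩ := hweak x y hx hy (by linarith) hxi hyi
    exact hxy i j hij
  rw [hq, Finset.sum_range_succ'] at hzero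
  have h0 := PP_one (altw (fun a => (ζ ^ 0) ^ a) (fun a => (ζ ^ 0) ^ (-a)) k) (by
    intro g hg a
    rcases altw_mem _ _ _ g hg with rfl | rfl <;> simp) A
  rw [h0, altw_length] at hzero
  have hre := congrArg Complex.re hzero
  rw [Complex.add_re, Complex.re_sum, Complex.natCast_re, Complex.zero_re] at hre
  have hlow : -(k * N * (13 * k * A.card : ℝ) ^ k) ≤ ∑ t ∈ range (k * N),
      (PP A (altw (fun a => (ζ ^ (t + 1)) ^ a) (fun a => (ζ ^ (t + 1)) ^ (-a)) k)).re := by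
    have := Finset.card_nsmul_le_sum (range (k * N)) (fun t =>
      (PP A (altw (fun a => (ζ ^ (t + 1)) ^ a) (fun a => (ζ ^ (t + 1)) ^ (-a)) k)).re)
      (-(13 * k * A.card : ℝ) ^ k) (fun t _ => pointwise _ _ (by
        intro a
        have h1 : ‖ζ ^ (t + 1)‖ = 1 := by rw [norm_pow, hζn, one_pow]
        have h2 : (starRingEnd ℂ) (ζ ^ (t + 1)) = (ζ ^ (t + 1))⁻¹ := (Complex.inv_eq_conj h1).symm
        rw [map_zpow₀, h2, inv_zpow, zpow_neg]) (by
        intro a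
        rw [norm_zpow, norm_pow, hζn, one_pow, one_zpow]) A k hk hn)
    simp only [Finset.card_range, nsmul_eq_mul] at this
    push_cast at this
    linarith
  have hdesc : 3 / 4 * (A.card : ℝ) ^ (2 * k) ≤ (A.card.descFactorial (2 * k) : ℕ) := by
    have h1 := Nat.pow_sub_le_descFactorial A.card (2 * k)
    have h2 : ((A.card + 1 - 2 * k : ℕ) : ℝ) ^ (2 * k) ≤ (A.card.descFactorial (2 * k) : ℕ) := by
      exact_mod_cast h1
    refine le_trans ?_ h2
    have hn0 : (0 : ℝ) < A.card := by exact_mod_cast (by omega : 0 < A.card)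
    have h3 : (A.card : ℝ) * (1 + (-(2 * k / A.card))) ≤ ((A.card + 1 - 2 * k : ℕ) : ℝ) := by
      rw [Nat.cast_sub (by omega)]
      push_cast
      have : (A.card : ℝ) * (1 + (-(2 * k / A.card))) = A.card - 2 * k := by field_simp; ring
      linarith
    have hk' : (1 : ℝ) ≤ k := by exact_mod_cast hk
    have hn' : (1024 * k : ℝ) ≤ A.card := by exact_mod_cast hn
    have hn2' : (16 * k ^ 2 : ℝ) ≤ A.card := by exact_mod_cast hn2
    have h4 : (2 * k / A.card : ℝ) ≤ 1 := by rw [div_le_one hn0]; linarith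
    have h5 := one_add_mul_le_pow (a := -(2 * k / A.card : ℝ)) (by linarith) (2 * k)
    have h6 : (3 / 4 : ℝ) ≤ 1 + ((2 * k : ℕ) : ℝ) * (-(2 * k / A.card : ℝ)) := by
      have : ((2 * k : ℕ) : ℝ) * (2 * k / A.card : ℝ) ≤ 1 / 4 := by
        push_cast
        rw [← mul_div_assoc, div_le_iff₀ hn0]
        nlinarith
      linarith
    calc 3 / 4 * (A.card : ℝ) ^ (2 * k)
        ≤ (1 + (-(2 * k / A.card : ℝ))) ^ (2 * k) * (A.card : ℝ) ^ (2 * k) := by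
          gcongr; exact h6.trans h5
      _ = ((A.card : ℝ) * (1 + (-(2 * k / A.card)))) ^ (2 * k) := by rw [← mul_pow, mul_comm]
      _ ≤ _ := by
          refine pow_le_pow_left₀ (mul_nonneg hn0.le (by linarith)) h3 _
  linarith

theorem main_theorem (k N : ℕ) (hk : 1 ≤ k)
    (hN : (2 * (k : ℝ) ^ ((9 : ℝ) / 2)) ^ k ≤ (N : ℝ))
    (A : Finset ℤ) (hA : A ⊆ Finset.Icc 1 (N : ℤ)) (hweak : IsWeakBkSet k A) :
    (A.card : ℝ) ≤ 16 * (k : ℝ) ^ ((3 : ℝ) / 2) * (N : ℝ) ^ ((1 : ℝ) / k) := by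
  rcases Nat.lt_or_ge k 2 with hk2 | hk2
  · have : k = 1 := by omega
    subst this
    have h1 := Finset.card_le_card hA
    simp at h1
    have h2 : (A.card : ℝ) ≤ N := by exact_mod_cast h1
    simp
    have : (0 : ℝ) ≤ N := by positivity
    linarith
  by_contra hlt
  push Not at hlt
  have hkr : (2 : ℝ) ≤ k := by exact_mod_cast hk2
  have hk0 : (0 : ℝ) < k := by linarith
  set r : ℝ := Real.sqrt k with hr
  have hr0 : 0 < r := Real.sqrt_pos.2 hk0
  have hr2 : r ^ 2 = k := Real.sq_sqrt hk0.le
  have e3 : (k : ℝ) ^ ((3 : ℝ) / 2) = r ^ 3 := by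
    rw [hr, Real.sqrt_eq_rpow, ← Real.rpow_natCast, ← Real.rpow_mul hk0.le]; norm_num
  have e9 : (k : ℝ) ^ ((9 : ℝ) / 2) = r ^ 9 := by
    rw [hr, Real.sqrt_eq_rpow, ← Real.rpow_natCast, ← Real.rpow_mul hk0.le]; norm_num
  rw [e9] at hN
  rw [e3] at hlt
  set M : ℝ := (N : ℝ) ^ ((1 : ℝ) / k) with hM
  have hM0 : 0 ≤ M := by positivity
  have hMk : M ^ k = N := by
    rw [hM, one_div, Real.rpow_inv_natCast_pow (by positivity) (by omega)]
  have hM1 : 2 * r ^ 9 ≤ M := by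
    rw [← hMk] at hN
    exact le_of_pow_le_pow_left₀ (by omega) hM0 hN
  have hn6 : 32 * (k : ℝ) ^ 6 ≤ A.card := by
    have : 16 * r ^ 3 * (2 * r ^ 9) ≤ 16 * r ^ 3 * M := by gcongr
    have e : 16 * r ^ 3 * (2 * r ^ 9) = 32 * (r ^ 2) ^ 6 := by ring
    rw [e, hr2] at this
    linarith
  have hn6' : 32 * k ^ 6 ≤ A.card := by exact_mod_cast hn6
  have hk5 : 2 ^ 5 ≤ k ^ 5 := Nat.pow_le_pow_left hk2 5
  have hk4 : 2 ^ 4 ≤ k ^ 4 := Nat.pow_le_pow_left hk2 4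
  have hc := core k N hk A hA hweak (by nlinarith) (by nlinarith [sq_nonneg k])
  have hn0 : (0 : ℝ) < A.card := lt_of_lt_of_le (by positivity) hn6
  set n : ℝ := (A.card : ℝ) with hn
  -- n^k ≤ ...
  have h1 : 3 / 4 * n ^ k ≤ k * N * (13 * k) ^ k := by
    have : 3 / 4 * n ^ k * n ^ k ≤ k * N * (13 * k) ^ k * n ^ k := by
      calc _ = 3 / 4 * n ^ (2 * k) := by rw [two_mul, pow_add]; ring
        _ ≤ _ := hc
        _ = _ := by rw [mul_pow (13 * (k : ℝ)) n]; ring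
    exact le_of_mul_le_mul_right this (by positivity)
  have h2 : (16 * r ^ 3) ^ k * N ≤ n ^ k := by
    rw [← hMk, ← mul_pow]
    exact pow_le_pow_left₀ (by positivity) hlt.le _
  have hNpos : (0 : ℝ) < N := lt_of_lt_of_le (by positivity) hN
  have h3 : 3 / 4 * (16 * r ^ 3) ^ k ≤ k * (13 * k) ^ k := by
    have : 3 / 4 * (16 * r ^ 3) ^ k * N ≤ k * (13 * k) ^ k * N := by
      calc _ = 3 / 4 * ((16 * r ^ 3) ^ k * N) := by ring
        _ ≤ 3 / 4 * n ^ k := by gcongr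
        _ ≤ _ := h1
        _ = _ := by ring
    exact le_of_mul_le_mul_right this hNpos
  have h4 : 3 / 4 * (16 / 13 * r) ^ k ≤ k := by
    have e : (16 * r ^ 3) ^ k = (16 / 13 * r) ^ k * (13 * (k : ℝ)) ^ k := by
      rw [← mul_pow, ← hr2]; congr 1; ring
    rw [e, ← mul_assoc] at h3
    exact le_of_mul_le_mul_right h3 (by positivity)
  have hr1 : 1 ≤ r := by
    rw [hr]; exact Real.one_le_sqrt.2 (by linarith)
  have h5 : (16 / 13 * r) ^ 2 ≤ (16 / 13 * r) ^ k := pow_le_pow_right₀ (by linarith) hk2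
  have h6 : (16 / 13 * r) ^ 2 = 256 / 169 * k := by rw [mul_pow, hr2]; norm_num
  nlinarith
end
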